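/- arXiv:2511.15289 — 7 statements merged into one kernel-verified Lean document; each statement's English description precedes it below -/
import Mathlib

section
/- Let (α,ψ) be a classical solution of (P)_λ with λ ≥ 0. Then: (i) for every nonzero w ∈ C_c^∞(Ω), ∫_Ω |∇w|² ≥ Λ(Ω,2p) ∫_Ω ρ_λ^{1/q} w², so that ∫_Ω |∇w|² − λp ∫_Ω ρ_λ^{1/q} w² ≥ (Λ(Ω,2p) − λp) ∫_Ω ρ_λ^{1/q} w²; (ii) for every φ ∈ C_c^∞(Ω) with ∫_Ω ρ_λ^{1/q}[φ]_λ² > 0, (∫_Ω |∇φ|² − λp ∫_Ω ρ_λ^{1/q}[φ]_λ²)/(∫_Ω ρ_λ^{1/q}[φ]_λ²) ≥ Λ(Ω,2p) − λp; in particular σ₁(α,ψ) ≥ Λ(Ω,2p) − λp, which is positive whenever λp < Λ(Ω,2p). -/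
/-!
Hölder's inequality with exponents `p/(p-1)` and `p`, together with the constraint `∫_Ω ρ = 1`,
gives `∫_Ω ρ^{1/q} w² ≤ (∫_Ω |w|^{2p})^{1/p}` (`holder_rhoq`). By definition of `Λ(Ω,2p)` as an
infimum this yields (i) (`lambda_mul_le`). For (ii), `⟨φ⟩_λ` is the mean of `φ` for the weight
`ρ^{1/q}`, so the weighted variance `∫_Ω ρ^{1/q} [φ]²` is at most the second moment
`∫_Ω ρ^{1/q} φ²` (`wdenom_le`), and (i) applies since `Λ(Ω,2p) ≥ 0`.

The bound on `σ₁` also requires the set of admissible `φ` to be nonempty, because `sInf ∅ = 0`.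
As `∫_Ω ρ = 1`, the open set `{ρ > 0}` is nonempty, and a bump function which is not constant on it
is admissible (`exists_admissible`).
-/

open MeasureTheory Set Filter

noncomputable section

abbrev Euc (N : ℕ) := EuclideanSpace ℝ (Fin N)

/-- The Laplacian as the sum of second partial derivatives. -/
def lap {N : ℕ} (f : Euc N → ℝ) (x : Euc N) : ℝ :=
  ∑ i : Fin N,
    fderiv ℝ (fun y => fderiv ℝ f y (EuclideanSpace.single i 1)) x (EuclideanSpace.single i 1)

/-- A bounded domain of class `C³`, described by a `C³` defining function. -/
def IsC3Domain {N : ℕ} (Ω : Set (Euc N)) : Prop :=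
  IsOpen Ω ∧ IsConnected Ω ∧ Bornology.IsBounded Ω ∧
    ∃ F : Euc N → ℝ, ContDiff ℝ 3 F ∧ Ω = {x | F x < 0} ∧
      ∀ x ∈ frontier Ω, fderiv ℝ F x ≠ 0

/-- `ρ_λ = [α+λψ]₊^p`. -/
def rho {N : ℕ} (p lam α : ℝ) (ψ : Euc N → ℝ) (x : Euc N) : ℝ :=
  (max (α + lam * ψ x) 0) ^ p

/-- `ρ_λ^{1/q} = [α+λψ]₊^{p-1}`. -/
def rhoq {N : ℕ} (p lam α : ℝ) (ψ : Euc N → ℝ) (x : Euc N) : ℝ :=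
  (max (α + lam * ψ x) 0) ^ (p - 1)

/-- `(α, ψ)` is a classical solution of the constrained problem `(P)_λ` on `Ω`. -/
def SolP {N : ℕ} (Ω : Set (Euc N)) (p lam α : ℝ) (ψ : Euc N → ℝ) : Prop :=
  ContinuousOn ψ (closure Ω) ∧ ContDiffOn ℝ 2 ψ Ω ∧
    (∀ x ∈ frontier Ω, ψ x = 0) ∧
    (∀ x ∈ Ω, -lap ψ x = rho p lam α ψ x) ∧
    ∫ x in Ω, rho p lam α ψ x = 1

/-- The weighted average `⟨φ⟩_λ`. -/
def avgl {N : ℕ} (Ω : Set (Euc N)) (p lam α : ℝ) (ψ φ : Euc N → ℝ) : ℝ :=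
  (∫ x in Ω, rhoq p lam α ψ x * φ x) / ∫ x in Ω, rhoq p lam α ψ x

/-- `[φ]_λ = φ - ⟨φ⟩_λ`. -/
def brk {N : ℕ} (Ω : Set (Euc N)) (p lam α : ℝ) (ψ φ : Euc N → ℝ) (x : Euc N) : ℝ :=
  φ x - avgl Ω p lam α ψ φ

/-- `φ ∈ C_c^∞(Ω)`. -/
def TestFun {N : ℕ} (Ω : Set (Euc N)) (φ : Euc N → ℝ) : Prop :=
  ContDiff ℝ (⊤ : ℕ∞) φ ∧ HasCompactSupport φ ∧ tsupport φ ⊆ Ω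

/-- `∫_Ω ρ_λ^{1/q} [φ]_λ²`. -/
def wdenom {N : ℕ} (Ω : Set (Euc N)) (p lam α : ℝ) (ψ φ : Euc N → ℝ) : ℝ :=
  ∫ x in Ω, rhoq p lam α ψ x * brk Ω p lam α ψ φ x ^ 2

/-- The Rayleigh-type quotient for the linearized problem. -/
def rayleigh {N : ℕ} (Ω : Set (Euc N)) (p lam α : ℝ) (ψ φ : Euc N → ℝ) : ℝ :=
  ((∫ x in Ω, ‖fderiv ℝ φ x‖ ^ 2) - lam * p * wdenom Ω p lam α ψ φ) / wdenom Ω p lam α ψ φ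

/-- The weighted first eigenvalue `σ₁(α,ψ)`. -/
def sigma1 {N : ℕ} (Ω : Set (Euc N)) (p lam α : ℝ) (ψ : Euc N → ℝ) : ℝ :=
  sInf {s | ∃ φ : Euc N → ℝ, TestFun Ω φ ∧ 0 < wdenom Ω p lam α ψ φ ∧
    s = rayleigh Ω p lam α ψ φ}

/-- The stability threshold `λ*(Ω,p)`. -/
def lamStar {N : ℕ} (Ω : Set (Euc N)) (p : ℝ) : ℝ :=
  sSup {lb : ℝ | 0 < lb ∧ ∀ lam α ψ, 0 ≤ lam → lam < lb → SolP Ω p lam α ψ →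
    0 < sigma1 Ω p lam α ψ}

/-- The positivity threshold `λ₊(Ω,p)`. -/
def lamPlusD {N : ℕ} (Ω : Set (Euc N)) (p : ℝ) : ℝ :=
  sSup {d : ℝ | 0 < d ∧ ∀ lam α ψ, 0 ≤ lam → lam < d → SolP Ω p lam α ψ → 0 < α}

/-- The Sobolev-type constant `Λ(Ω,t)`. -/
def LambdaC {N : ℕ} (Ω : Set (Euc N)) (t : ℝ) : ℝ :=
  sInf {s : ℝ | ∃ w : Euc N → ℝ, TestFun Ω w ∧ w ≠ 0 ∧
    s = (∫ x in Ω, ‖fderiv ℝ w x‖ ^ 2) / (∫ x in Ω, |w x| ^ t) ^ (2 / t)}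

lemma rhoq_nonneg {N : ℕ} (p lam α : ℝ) (ψ : Euc N → ℝ) (x : Euc N) :
    0 ≤ rhoq p lam α ψ x := by
  unfold rhoq; positivity

lemma rhoq_continuousOn {N : ℕ} {Ω : Set (Euc N)} {p lam α : ℝ} {ψ : Euc N → ℝ} (hp : 1 < p)
    (hψ : ContinuousOn ψ (closure Ω)) : ContinuousOn (rhoq p lam α ψ) (closure Ω) := by
  unfold rhoq
  refine ContinuousOn.rpow_const ?_ (fun x _ => Or.inr (by linarith))
  fun_prop

lemma integrableOn_of_closure {N : ℕ} {Ω : Set (Euc N)} (hΩb : Bornology.IsBounded Ω)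
    {f : Euc N → ℝ} (hf : ContinuousOn f (closure Ω)) : IntegrableOn f Ω :=
  (hf.integrableOn_compact hΩb.isCompact_closure).mono_set subset_closure

lemma setIntegral_pos_of_continuousOn {N : ℕ} {Ω : Set (Euc N)} (hΩo : IsOpen Ω)
    {f : Euc N → ℝ} (hf : ContinuousOn f Ω) (hfi : IntegrableOn f Ω) (h0 : ∀ x, 0 ≤ f x)
    {x : Euc N} (hx : x ∈ Ω) (hfx : f x ≠ 0) : 0 < ∫ y in Ω, f y := by
  refine lt_of_le_of_ne (integral_nonneg h0) fun h => hfx ?_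
  have h1 := (integral_eq_zero_iff_of_nonneg h0 hfi).1 h.symm
  have h2 : EqOn f (0 : Euc N → ℝ) Ω :=
    Measure.eqOn_open_of_ae_eq h1 hΩo hf continuousOn_const
  exact h2 hx

lemma LambdaC_nonneg {N : ℕ} (Ω : Set (Euc N)) (t : ℝ) : 0 ≤ LambdaC Ω t := by
  refine Real.sInf_nonneg ?_
  rintro s ⟨w, -, -, rfl⟩
  positivity

/-- Hölder's inequality for the weight `ρ^{1/q}`, whose `q`-th power has integral one. -/
lemma holder_rhoq {N : ℕ} {Ω : Set (Euc N)} (hΩb : Bornology.IsBounded Ω) {p lam α : ℝ}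
    (hp : 1 < p) {ψ : Euc N → ℝ} (hψ : ContinuousOn ψ (closure Ω))
    (hint : ∫ x in Ω, rho p lam α ψ x = 1) {w : Euc N → ℝ} (hw : Continuous w) :
    ∫ x in Ω, rhoq p lam α ψ x * w x ^ 2 ≤ (∫ x in Ω, |w x| ^ (2 * p)) ^ (2 / (2 * p)) := by
  have hpq : (p / (p - 1)).HolderConjugate p := (Real.HolderConjugate.conjExponent hp).symm
  have hfin : IsFiniteMeasure (volume.restrict Ω) :=
    ⟨by simpa using hΩb.measure_lt_top⟩
  have hΩm : volume.restrict Ω ≤ volume.restrict (closure Ω) :=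
    Measure.restrict_mono subset_closure le_rfl
  -- a function continuous on the compact closure lies in every `L^r(Ω)`
  have key : ∀ (f : Euc N → ℝ) (r : ENNReal), ContinuousOn f (closure Ω) →
      MemLp f r (volume.restrict Ω) := by
    intro f r hf
    obtain ⟨C, hC⟩ := hΩb.isCompact_closure.exists_bound_of_continuousOn hf
    refine MemLp.of_bound ((hf.aestronglyMeasurable isClosed_closure.measurableSet).mono_measure
      hΩm) C (Measure.absolutelyContinuous_of_le hΩm |>.ae_le ?_)
    exact (ae_restrict_iff' isClosed_closure.measurableSet).2 (Eventually.of_forall hC)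
  have hH := integral_mul_le_Lp_mul_Lq_of_nonneg hpq (μ := volume.restrict Ω)
    (f := rhoq p lam α ψ) (g := fun x => w x ^ 2)
    (Eventually.of_forall fun x => rhoq_nonneg p lam α ψ x)
    (Eventually.of_forall fun x => sq_nonneg _)
    (key _ _ (rhoq_continuousOn hp hψ)) (key _ _ (hw.pow 2).continuousOn)
  have h1 : ∀ x, rhoq p lam α ψ x ^ (p / (p - 1)) = rho p lam α ψ x := by
    intro x
    unfold rhoq rho
    rw [← Real.rpow_mul (le_max_right _ _), mul_div_cancel₀]
    linarith
  have h2 : ∀ x, (w x ^ 2) ^ p = |w x| ^ (2 * p) := by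
    intro x
    rw [Real.rpow_mul (abs_nonneg _), Real.rpow_two, sq_abs]
  have h3 : 2 / (2 * p) = 1 / p := by
    field_simp
  simp only [h1, h2, hint, Real.one_rpow, one_mul] at hH
  rw [h3]
  exact hH

/-- The weighted Poincaré-type inequality with constant `Λ(Ω,2p)`. -/
lemma lambda_mul_le {N : ℕ} {Ω : Set (Euc N)} (hΩo : IsOpen Ω) (hΩb : Bornology.IsBounded Ω)
    {p lam α : ℝ} (hp : 1 < p) {ψ : Euc N → ℝ} (hψ : ContinuousOn ψ (closure Ω))
    (hint : ∫ x in Ω, rho p lam α ψ x = 1) {w : Euc N → ℝ} (hw : TestFun Ω w) (hw0 : w ≠ 0) :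
    LambdaC Ω (2 * p) * ∫ x in Ω, rhoq p lam α ψ x * w x ^ 2 ≤
      ∫ x in Ω, ‖fderiv ℝ w x‖ ^ 2 := by
  have hwc : Continuous w := hw.1.continuous
  have hcont : Continuous fun x => |w x| ^ (2 * p) :=
    hwc.abs.rpow_const fun x => Or.inr (by linarith)
  obtain ⟨x, hx⟩ := Function.ne_iff.1 hw0
  have hpos : 0 < ∫ x in Ω, |w x| ^ (2 * p) :=
    setIntegral_pos_of_continuousOn hΩo hcont.continuousOn
      (integrableOn_of_closure hΩb hcont.continuousOn) (fun x => by positivity)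
      (hw.2.2 (subset_tsupport w hx)) (Real.rpow_pos_of_pos (abs_pos.2 hx) _).ne'
  have hpos2 := Real.rpow_pos_of_pos hpos (2 / (2 * p))
  have hle : LambdaC Ω (2 * p) ≤
      (∫ x in Ω, ‖fderiv ℝ w x‖ ^ 2) / (∫ x in Ω, |w x| ^ (2 * p)) ^ (2 / (2 * p)) := by
    refine csInf_le ⟨0, ?_⟩ ⟨w, hw, hw0, rfl⟩
    rintro s ⟨v, -, -, rfl⟩
    positivity
  calc LambdaC Ω (2 * p) * ∫ x in Ω, rhoq p lam α ψ x * w x ^ 2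
      ≤ LambdaC Ω (2 * p) * (∫ x in Ω, |w x| ^ (2 * p)) ^ (2 / (2 * p)) :=
        mul_le_mul_of_nonneg_left (holder_rhoq hΩb hp hψ hint hwc) (LambdaC_nonneg _ _)
    _ ≤ _ := (le_div_iff₀ hpos2).1 hle

/-- The weighted variance is at most the weighted second moment. -/
lemma wdenom_le {N : ℕ} {Ω : Set (Euc N)} (hΩb : Bornology.IsBounded Ω)
    {p lam α : ℝ} (hp : 1 < p) {ψ : Euc N → ℝ} (hψ : ContinuousOn ψ (closure Ω))
    {φ : Euc N → ℝ} (hφ : Continuous φ) :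
    wdenom Ω p lam α ψ φ ≤ ∫ x in Ω, rhoq p lam α ψ x * φ x ^ 2 := by
  have hr := rhoq_continuousOn (lam := lam) (α := α) hp hψ
  have i0 : IntegrableOn (rhoq p lam α ψ) Ω := integrableOn_of_closure hΩb hr
  have i1 : IntegrableOn (fun x => rhoq p lam α ψ x * φ x) Ω :=
    integrableOn_of_closure hΩb (hr.mul hφ.continuousOn)
  have i2 : IntegrableOn (fun x => rhoq p lam α ψ x * φ x ^ 2) Ω :=
    integrableOn_of_closure hΩb (hr.mul (hφ.pow 2).continuousOn)
  set A := ∫ x in Ω, rhoq p lam α ψ x with hA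
  set B := ∫ x in Ω, rhoq p lam α ψ x * φ x with hB
  have hA0 : 0 ≤ A := integral_nonneg fun x => rhoq_nonneg p lam α ψ x
  have hc : avgl Ω p lam α ψ φ = B / A := rfl
  have e : wdenom Ω p lam α ψ φ =
      (∫ x in Ω, rhoq p lam α ψ x * φ x ^ 2) - 2 * (B / A) * B + (B / A) ^ 2 * A := by
    have e1 : ∀ x, rhoq p lam α ψ x * brk Ω p lam α ψ φ x ^ 2 =
        rhoq p lam α ψ x * φ x ^ 2 - 2 * (B / A) * (rhoq p lam α ψ x * φ x) +
          (B / A) ^ 2 * rhoq p lam α ψ x := by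
      intro x; unfold brk; rw [hc]; ring
    unfold wdenom
    simp_rw [e1]
    have i3 : IntegrableOn
        (fun x => rhoq p lam α ψ x * φ x ^ 2 - 2 * (B / A) * (rhoq p lam α ψ x * φ x)) Ω :=
      i2.sub (i1.const_mul _)
    rw [integral_add i3 (i0.const_mul _),
      integral_sub i2 (i1.const_mul _), integral_const_mul, integral_const_mul]
  rw [e]
  rcases hA0.eq_or_lt with h | h
  · simp [← h]
  · have e2 : 2 * (B / A) * B = 2 * (B ^ 2 / A) := by ring
    have e3 : (B / A) ^ 2 * A = B ^ 2 / A := by field_simp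
    have : 0 ≤ B ^ 2 / A := by positivity
    linarith

/-- Some test function has positive weighted variance: a bump equal to `1` at one point and to `0`
at another point of the open set where the weight is positive. -/
lemma exists_admissible {N : ℕ} (hN : 2 ≤ N) {Ω : Set (Euc N)} (hΩo : IsOpen Ω)
    (hΩb : Bornology.IsBounded Ω) {p lam α : ℝ} (hp : 1 < p) {ψ : Euc N → ℝ}
    (hψ : ContinuousOn ψ (closure Ω)) (hint : ∫ x in Ω, rho p lam α ψ x = 1) :
    ∃ φ : Euc N → ℝ, TestFun Ω φ ∧ 0 < wdenom Ω p lam α ψ φ := by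
  have hr := rhoq_continuousOn (lam := lam) (α := α) hp hψ
  obtain ⟨x, hxΩ, hx⟩ : ∃ x ∈ Ω, rhoq p lam α ψ x ≠ 0 := by
    by_contra! hcon
    have : ∫ x in Ω, rho p lam α ψ x = 0 := by
      refine setIntegral_eq_zero_of_forall_eq_zero fun x hx => ?_
      have h := hcon x hx
      unfold rhoq at h
      have h0 := (Real.rpow_eq_zero (le_max_right _ _) (by linarith)).1 h
      unfold rho
      rw [h0, Real.zero_rpow (by linarith)]
    linarith
  have hU : IsOpen (Ω ∩ rhoq p lam α ψ ⁻¹' {0}ᶜ) :=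
    (hr.mono subset_closure).isOpen_inter_preimage hΩo isOpen_compl_singleton
  set U := Ω ∩ rhoq p lam α ψ ⁻¹' {0}ᶜ with hUdef
  have hxU : x ∈ U := ⟨hxΩ, hx⟩
  have : Nonempty (Fin N) := ⟨⟨0, by omega⟩⟩
  obtain ⟨y, hyU, hyx⟩ : ∃ y ∈ U, y ≠ x :=
    (infinite_of_mem_nhds x (hU.mem_nhds hxU)).nontrivial.exists_ne x
  obtain ⟨φ, hsupp, hcs, hsm, -, hφx⟩ :=
    exists_contDiff_tsupport_subset (n := ⊤) (inter_mem (hU.mem_nhds hxU)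
      (isOpen_compl_singleton.mem_nhds (show x ∈ ({y}ᶜ : Set (Euc N)) from hyx.symm)))
  have hφy : φ y = 0 := by
    by_contra h
    exact (hsupp (subset_tsupport φ h)).2 rfl
  refine ⟨φ, ⟨hsm, hcs, fun z hz => (hsupp hz).1.1⟩, ?_⟩
  have hcont : ContinuousOn (fun x => rhoq p lam α ψ x * brk Ω p lam α ψ φ x ^ 2)
      (closure Ω) :=
    hr.mul ((hsm.continuous.sub continuous_const).pow 2).continuousOn
  -- `φ - ⟨φ⟩` cannot vanish at both points
  obtain ⟨z, hzU, hz⟩ : ∃ z ∈ U, brk Ω p lam α ψ φ z ≠ 0 := by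
    by_contra! hcon
    have h1 := hcon x hxU
    have h2 := hcon y hyU
    unfold brk at h1 h2
    linarith
  exact setIntegral_pos_of_continuousOn hΩo (hcont.mono subset_closure)
    (integrableOn_of_closure hΩb hcont)
    (fun x => mul_nonneg (rhoq_nonneg p lam α ψ x) (sq_nonneg _)) hzU.1
    (mul_ne_zero hzU.2 (pow_ne_zero 2 hz))

/-- for a classical solution `(α,ψ)` of `(P)_λ`:
(i) for every nonzero `w ∈ C_c^∞(Ω)`, `∫ |∇w|² ≥ Λ(Ω,2p) ∫ ρ_λ^{1/q} w²` and hence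
`∫ |∇w|² - λp ∫ ρ_λ^{1/q} w² ≥ (Λ(Ω,2p) - λp) ∫ ρ_λ^{1/q} w²`;
(ii) for every admissible `φ ∈ C_c^∞(Ω)` the Rayleigh quotient is `≥ Λ(Ω,2p) - λp`;
in particular `σ₁(α,ψ) ≥ Λ(Ω,2p) - λp`, which is positive whenever `λp < Λ(Ω,2p)`. -/
theorem sigma1_lower_bound
    {N : ℕ} (hN : 2 ≤ N) (Ω : Set (Euc N))
    (hΩo : IsOpen Ω) (hΩc : IsConnected Ω) (hΩb : Bornology.IsBounded Ω)
    (hvol : volume Ω = 1)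
    (p : ℝ) (hp : 1 < p) (hpN : 3 ≤ N → p < (N : ℝ) / ((N : ℝ) - 2))
    (lam α : ℝ) (hlam : 0 ≤ lam) (ψ : Euc N → ℝ) (hsol : SolP Ω p lam α ψ) :
    (∀ w : Euc N → ℝ, TestFun Ω w → w ≠ 0 →
      LambdaC Ω (2 * p) * ∫ x in Ω, rhoq p lam α ψ x * w x ^ 2 ≤
        (∫ x in Ω, ‖fderiv ℝ w x‖ ^ 2) ∧
      (LambdaC Ω (2 * p) - lam * p) * ∫ x in Ω, rhoq p lam α ψ x * w x ^ 2 ≤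
        (∫ x in Ω, ‖fderiv ℝ w x‖ ^ 2) - lam * p * ∫ x in Ω, rhoq p lam α ψ x * w x ^ 2) ∧
    (∀ φ : Euc N → ℝ, TestFun Ω φ → 0 < wdenom Ω p lam α ψ φ →
      LambdaC Ω (2 * p) - lam * p ≤ rayleigh Ω p lam α ψ φ) ∧
    LambdaC Ω (2 * p) - lam * p ≤ sigma1 Ω p lam α ψ ∧
    (lam * p < LambdaC Ω (2 * p) → 0 < sigma1 Ω p lam α ψ) := by
  obtain ⟨hψ, -, -, -, hint⟩ := hsol
  have main := fun (w : Euc N → ℝ) (hw : TestFun Ω w) (hw0 : w ≠ 0) =>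
    lambda_mul_le hΩo hΩb hp hψ hint hw hw0
  have quot : ∀ φ : Euc N → ℝ, TestFun Ω φ → 0 < wdenom Ω p lam α ψ φ →
      LambdaC Ω (2 * p) - lam * p ≤ rayleigh Ω p lam α ψ φ := by
    intro φ hφ hpos
    have hle := wdenom_le (lam := lam) (α := α) hΩb hp hψ hφ.1.continuous
    have hφ0 : φ ≠ 0 := by
      rintro rfl
      have : ∫ x in Ω, rhoq p lam α ψ x * (0 : Euc N → ℝ) x ^ 2 = 0 := by simp
      linarith
    have h1 := mul_le_mul_of_nonneg_left hle (LambdaC_nonneg Ω (2 * p))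
    have h2 := main φ hφ hφ0
    unfold rayleigh
    rw [le_div_iff₀ hpos]
    linarith
  have sig : LambdaC Ω (2 * p) - lam * p ≤ sigma1 Ω p lam α ψ := by
    obtain ⟨φ, hφ, hpos⟩ := exists_admissible hN hΩo hΩb hp hψ hint
    refine le_csInf ⟨_, φ, hφ, hpos, rfl⟩ ?_
    rintro s ⟨φ, hφ, hpos, rfl⟩
    exact quot φ hφ hpos
  refine ⟨fun w hw hw0 => ⟨main w hw hw0, ?_⟩, quot, sig, fun h => by linarith⟩
  have := main w hw hw0
  linarith

end
end

section
/- Gluing a harmonic tail (N ≥ 3): let 0 < R < R_N and set A := −u'(1) / ((N−2) R^{2/(p−1)−N+2}) > 0. Define v on 𝔻̄_N by v(x) = R^{−2/(p−1)} u(|x|/R) for |x| ≤ R and v(x) = A(|x|^{−(N−2)} − R^{−(N−2)}) for R ≤ |x| ≤ R_N. Then v is twice continuously differentiable on 𝔻̄_N, v < 0 on the annulus {R < |x| ≤ R_N}, v is harmonic in {R < |x| < R_N}, and −Δv = [v]₊^p in 𝔻_N. -/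
/-!
Near the sphere `‖x‖ = R` the glued function is radial, `v x = g ‖x‖`, so its regularity reduces to
the one-variable statement that `g` is `C²` on `(0, ∞)`. The two pieces of `g` agree at `R` to
second order: values because `u 1 = 0`; first derivatives by the choice of `A`; second
derivatives because both pieces satisfy `g'' + (N-1)/R · g' = 0` at `R`. For the tail this is
harmonicity; for the inner piece it is the Lane–Emden equation in radial form, valid on `(0, 1)` and
carried to `r = 1` by continuity (`profile_derivs`). The gluing itself is `hasDerivAt_glue` and
`continuousAt_glue`.

The equation for `‖x‖ < R`, the origin included, is the scaling invariance of the Lane–Emden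
equation (`lap_scale`); for `‖x‖ ≥ R` it follows from the polar formula `lap_radial`, since there
`[v]₊ = 0` and `g` has the derivatives of the tail.
-/

open MeasureTheory Set Filter

noncomputable section

lemma lap_congr {N : ℕ} {f g : Euc N → ℝ} {x : Euc N} (h : f =ᶠ[nhds x] g) :
    lap f x = lap g x := by
  unfold lap
  refine Finset.sum_congr rfl fun i _ => ?_
  have : (fun y => fderiv ℝ f y (EuclideanSpace.single i 1)) =ᶠ[nhds x]
      (fun y => fderiv ℝ g y (EuclideanSpace.single i 1)) := by
    filter_upwards [h.eventuallyEq_nhds] with y hy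
    rw [hy.fderiv_eq]
  rw [this.fderiv_eq]

lemma lap_scale {N : ℕ} (f : Euc N → ℝ) (c a : ℝ) (x : Euc N) :
    lap (fun y => c * f (a • y)) x = c * a ^ 2 * lap f (a • x) := by
  unfold lap
  rw [Finset.mul_sum]
  refine Finset.sum_congr rfl fun i _ => ?_
  have hs : ∀ (g : Euc N → ℝ) (d : ℝ) (y : Euc N),
      fderiv ℝ (fun y => d * g (a • y)) y = d • a • fderiv ℝ g (a • y) := by
    intro g d y
    have h1 : (fun y => d * g (a • y)) = d • (fun y => g (a • y)) := by
      ext; simp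
    rw [h1, fderiv_const_smul_field, Pi.smul_apply, fderiv_comp_smul]
  have h2 : (fun y => fderiv ℝ (fun y => c * f (a • y)) y (EuclideanSpace.single i 1)) =
      fun y => (c * a) * (fun z => fderiv ℝ f z (EuclideanSpace.single i 1)) (a • y) := by
    ext y
    rw [hs]
    simp [mul_assoc]
  rw [h2, hs (fun z => fderiv ℝ f z (EuclideanSpace.single i 1)) (c * a) x]
  simp
  ring

lemma hasFDerivAt_norm_euc {N : ℕ} {x : Euc N} (hx : x ≠ 0) :
    HasFDerivAt (fun y : Euc N => ‖y‖) (‖x‖⁻¹ • innerSL ℝ x) x := by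
  have hn : ‖x‖ ≠ 0 := norm_ne_zero_iff.2 hx
  have h := (hasStrictFDerivAt_norm_sq x).hasFDerivAt.sqrt (pow_ne_zero 2 hn)
  simp only [Real.sqrt_sq (norm_nonneg _)] at h
  have h' : (1 / (2 * ‖x‖)) • 2 • innerSL ℝ x = ‖x‖⁻¹ • innerSL ℝ x := by
    rw [← Nat.cast_smul_eq_nsmul ℝ, smul_smul]
    congr 1
    field_simp
    norm_num
  rwa [h'] at h

/-- The polar form `g'' + (N-1)/r · g'` of the Laplacian of a radial function, away from the
origin. -/
lemma lap_radial {N : ℕ} {g g1 : ℝ → ℝ} {g2 : ℝ} {x : Euc N} (hx : x ≠ 0)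
    (hg : ∀ᶠ r in nhds ‖x‖, HasDerivAt g (g1 r) r) (hg1 : HasDerivAt g1 g2 ‖x‖) :
    lap (fun y => g ‖y‖) x = g2 + ((N : ℝ) - 1) / ‖x‖ * g1 ‖x‖ := by
  have hn : ‖x‖ ≠ 0 := norm_ne_zero_iff.2 hx
  have hterm : ∀ i : Fin N, fderiv ℝ (fun y => fderiv ℝ (fun y : Euc N => g ‖y‖) y
      (EuclideanSpace.single i 1)) x (EuclideanSpace.single i 1) =
      (g2 / ‖x‖ ^ 2 - g1 ‖x‖ / ‖x‖ ^ 3) * x i ^ 2 + g1 ‖x‖ / ‖x‖ := by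
    intro i
    have h1 : (fun y => fderiv ℝ (fun y : Euc N => g ‖y‖) y (EuclideanSpace.single i 1))
        =ᶠ[nhds x] fun y => g1 ‖y‖ * ‖y‖⁻¹ * y i := by
      have hc : Tendsto (fun y : Euc N => ‖y‖) (nhds x) (nhds ‖x‖) :=
        continuous_norm.continuousAt
      filter_upwards [hc.eventually hg, isOpen_ne.mem_nhds hx] with y hy hy0
      have h3 : HasFDerivAt (fun y : Euc N => g ‖y‖) _ y :=
        hy.comp_hasFDerivAt y (hasFDerivAt_norm_euc hy0)
      rw [h3.fderiv]
      simp [EuclideanSpace.inner_single_right, mul_assoc]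
    rw [h1.fderiv_eq]
    have hN := hasFDerivAt_norm_euc hx
    have h2 := ((hg1.comp_hasFDerivAt x hN).mul
      ((hasDerivAt_inv hn).comp_hasFDerivAt x hN)).mul
      (EuclideanSpace.proj i : Euc N →L[ℝ] ℝ).hasFDerivAt
    have h3 : HasFDerivAt (fun y : Euc N => g1 ‖y‖ * ‖y‖⁻¹ * y i) _ x := h2
    rw [h3.fderiv]
    simp [EuclideanSpace.inner_single_right]
    field_simp
    ring
  unfold lap
  rw [Finset.sum_congr rfl fun i _ => hterm i, Finset.sum_add_distrib, ← Finset.mul_sum]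
  have hs : ∑ i, x i ^ 2 = ‖x‖ ^ 2 := by
    rw [EuclideanSpace.norm_sq_eq]; simp
  rw [hs]
  simp
  field_simp
  ring

lemma hasDerivAt_glue {R : ℝ} {f f1 k k1 : ℝ → ℝ}
    (hf : ∀ r ∈ Ioc 0 R, HasDerivWithinAt f (f1 r) (Icc 0 R) r)
    (hk : ∀ r, 0 < r → HasDerivAt k (k1 r) r) (h0 : f R = k R) (h1 : f1 R = k1 R)
    {r : ℝ} (hr : 0 < r) :
    HasDerivAt (fun s => if s ≤ R then f s else k s) (if r ≤ R then f1 r else k1 r) r := by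
  rcases lt_trichotomy r R with h | h | h
  · rw [if_pos h.le]
    refine ((hf r ⟨hr, h.le⟩).hasDerivAt (Icc_mem_nhds hr h)).congr_of_eventuallyEq ?_
    filter_upwards [Iio_mem_nhds h] with s hs
    rw [if_pos (le_of_lt hs)]
  · subst h
    rw [if_pos le_rfl, ← hasDerivWithinAt_univ, ← Iic_union_Ici (a := r)]
    refine HasDerivWithinAt.union ?_ ?_
    · have := (hf r ⟨hr, le_rfl⟩).mono_of_mem_nhdsWithin (s := Iic r)
        (mem_of_superset (inter_mem_nhdsWithin (Iic r) (Ici_mem_nhds hr)) fun s hs => ⟨hs.2, hs.1⟩)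
      exact this.congr (fun s hs => if_pos hs) (if_pos le_rfl)
    · rw [h1]
      refine (hk r hr).hasDerivWithinAt.congr (fun s hs => ?_) (by simp [h0])
      rcases (show r ≤ s from hs).eq_or_lt with rfl | h
      · simp [h0]
      · simp [h]
  · rw [if_neg h.not_ge]
    refine (hk r hr).congr_of_eventuallyEq ?_
    filter_upwards [Ioi_mem_nhds h] with s hs
    rw [if_neg (not_le.2 hs)]

lemma continuousAt_glue {R : ℝ} {f k : ℝ → ℝ}
    (hf : ContinuousOn f (Icc 0 R))
    (hk : ∀ r, 0 < r → ContinuousAt k r) (h0 : f R = k R) {r : ℝ} (hr : 0 < r) :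
    ContinuousAt (fun s => if s ≤ R then f s else k s) r := by
  rcases lt_trichotomy r R with h | h | h
  · refine (hf.continuousAt (Icc_mem_nhds hr h)).congr ?_
    filter_upwards [Iio_mem_nhds h] with s hs
    rw [if_pos (le_of_lt hs)]
  · subst h
    rw [← continuousWithinAt_univ, ← Iic_union_Ici (a := r)]
    refine ContinuousWithinAt.union ?_ ?_
    · have := (hf r ⟨hr.le, le_rfl⟩).mono_of_mem_nhdsWithin (s := Iic r)
        (mem_of_superset (inter_mem_nhdsWithin (Iic r) (Ici_mem_nhds hr)) fun s hs => ⟨hs.2, hs.1⟩)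
      exact this.congr (fun s hs => if_pos hs) (if_pos le_rfl)
    · refine (hk r hr).continuousWithinAt.congr (fun s hs => ?_) (by simp [h0])
      rcases (show r ≤ s from hs).eq_or_lt with rfl | h
      · simp [h0]
      · simp [h]
  · refine (hk r hr).congr ?_
    filter_upwards [Ioi_mem_nhds h] with s hs
    rw [if_neg (not_le.2 hs)]

lemma contDiffAt_two_of_hasDerivAt {g g1 g2 : ℝ → ℝ}
    (h1 : ∀ r, 0 < r → HasDerivAt g (g1 r) r) (h2 : ∀ r, 0 < r → HasDerivAt g1 (g2 r) r)
    (h3 : ∀ r, 0 < r → ContinuousAt g2 r) {r : ℝ} (hr : 0 < r) : ContDiffAt ℝ 2 g r := by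
  have hc1 : ContDiffOn ℝ 1 g1 (Ioi 0) := by
    rw [show (1 : WithTop ℕ∞) = 0 + 1 by norm_num, contDiffOn_succ_iff_deriv_of_isOpen isOpen_Ioi]
    refine ⟨fun s hs => (h2 s hs).differentiableAt.differentiableWithinAt, by simp, ?_⟩
    rw [contDiffOn_zero]
    exact ContinuousOn.congr (fun s hs => (h3 s hs).continuousWithinAt) fun s hs => (h2 s hs).deriv
  have hc2 : ContDiffOn ℝ 2 g (Ioi 0) := by
    rw [show (2 : WithTop ℕ∞) = 1 + 1 by norm_num, contDiffOn_succ_iff_deriv_of_isOpen isOpen_Ioi]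
    refine ⟨fun s hs => (h1 s hs).differentiableAt.differentiableWithinAt, by simp, ?_⟩
    exact hc1.congr fun s hs => (h1 s hs).deriv
  exact hc2.contDiffAt (Ioi_mem_nhds hr)

/-- The radial profile of a function that is `C²` on the closed unit ball is itself `C²` on
`[0, 1]`, since it is the restriction of that function to a ray. -/
lemma profile_contDiffOn {N : ℕ} (hN : 0 < N) {u : ℝ → ℝ} {u0 : Euc N → ℝ}
    (hrad : ∀ x ∈ Metric.closedBall (0 : Euc N) 1, u0 x = u ‖x‖)
    (hreg : ContDiffOn ℝ 2 u0 (Metric.closedBall (0 : Euc N) 1)) :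
    ContDiffOn ℝ 2 u (Icc 0 1) := by
  let e : Euc N := EuclideanSpace.single ⟨0, hN⟩ 1
  have he : ‖e‖ = 1 := by simp [e]
  have hn : ∀ r ∈ Icc (0 : ℝ) 1, ‖r • e‖ = r := fun r hr => by
    rw [norm_smul, he, Real.norm_of_nonneg hr.1, mul_one]
  have hm : MapsTo (fun r : ℝ => r • e) (Icc 0 1) (Metric.closedBall 0 1) := fun r hr => by
    rw [mem_closedBall_zero_iff, hn r hr]; exact hr.2
  have hl : ContDiff ℝ 2 (fun r : ℝ => r • e) := by fun_prop
  refine (hreg.comp hl.contDiffOn hm).congr fun r hr => ?_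
  simp only [Function.comp]
  rw [hrad _ (hm hr), hn r hr]

/-- The first two derivatives `u'`, `u''` of the profile on `[0, 1]` (one-sided at the end points),
with the radial form of the Lane–Emden equation carried to `r = 1` by continuity. -/
lemma profile_derivs {N : ℕ} (hN : 0 < N) {p : ℝ} (hp : 0 < p) {u : ℝ → ℝ} {u0 : Euc N → ℝ}
    (hrad : ∀ x ∈ Metric.closedBall (0 : Euc N) 1, u0 x = u ‖x‖)
    (hreg : ContDiffOn ℝ 2 u0 (Metric.closedBall (0 : Euc N) 1))
    (heq : ∀ x ∈ Metric.ball (0 : Euc N) 1, -lap u0 x = u0 x ^ p)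
    (hu1 : u 1 = 0) (hd : DifferentiableAt ℝ u 1) :
    ∃ u1 u2 : ℝ → ℝ, (∀ r ∈ Icc (0 : ℝ) 1, HasDerivWithinAt u (u1 r) (Icc 0 1) r) ∧
      (∀ r ∈ Icc (0 : ℝ) 1, HasDerivWithinAt u1 (u2 r) (Icc 0 1) r) ∧
      ContinuousOn u2 (Icc 0 1) ∧ u1 1 = deriv u 1 ∧ u2 1 = -((N : ℝ) - 1) * deriv u 1 := by
  have hU : UniqueDiffOn ℝ (Icc (0 : ℝ) 1) := uniqueDiffOn_Icc one_pos
  have hu := profile_contDiffOn hN hrad hreg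
  have hc1 : ContDiffOn ℝ 1 (derivWithin u (Icc 0 1)) (Icc 0 1) :=
    hu.derivWithin hU (by norm_num)
  have hc2 : ContDiffOn ℝ 0 (derivWithin (derivWithin u (Icc 0 1)) (Icc 0 1)) (Icc 0 1) :=
    hc1.derivWithin hU (by norm_num)
  have h1 : ∀ r ∈ Icc (0 : ℝ) 1, HasDerivWithinAt u (derivWithin u (Icc 0 1) r) (Icc 0 1) r :=
    fun r hr => (hu.differentiableOn (by norm_num) r hr).hasDerivWithinAt
  have h2 : ∀ r ∈ Icc (0 : ℝ) 1, HasDerivWithinAt (derivWithin u (Icc 0 1))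
      (derivWithin (derivWithin u (Icc 0 1)) (Icc 0 1) r) (Icc 0 1) r :=
    fun r hr => (hc1.differentiableOn (by norm_num) r hr).hasDerivWithinAt
  generalize derivWithin (derivWithin u (Icc 0 1)) (Icc 0 1) = u2 at *
  have hone : (1 : ℝ) ∈ Icc (0 : ℝ) 1 := ⟨zero_le_one, le_rfl⟩
  have hv1 : derivWithin u (Icc 0 1) 1 = deriv u 1 := hd.derivWithin (hU 1 hone)
  generalize derivWithin u (Icc 0 1) = u1 at *
  refine ⟨u1, u2, h1, h2, hc2.continuousOn, hv1, ?_⟩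
  have hode : ∀ r ∈ Ioo (0 : ℝ) 1, u2 r + ((N : ℝ) - 1) / r * u1 r + u r ^ p = 0 := by
    intro r hr
    let x : Euc N := EuclideanSpace.single ⟨0, hN⟩ r
    have hx : ‖x‖ = r := by simp [x, abs_of_pos hr.1]
    have hx0 : x ≠ 0 := by rw [← norm_pos_iff, hx]; exact hr.1
    have hxb : x ∈ Metric.ball (0 : Euc N) 1 := by rw [mem_ball_zero_iff, hx]; exact hr.2
    have h3 := heq x hxb
    have hloc : u0 =ᶠ[nhds x] fun y => u ‖y‖ := by
      filter_upwards [Metric.isOpen_ball.mem_nhds hxb] with y hy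
      exact hrad y (Metric.ball_subset_closedBall hy)
    rw [lap_congr hloc, lap_radial (g1 := u1) (g2 := u2 r) hx0, hloc.eq_of_nhds, hx] at h3
    · linarith
    · rw [hx]
      filter_upwards [Ioo_mem_nhds hr.1 hr.2] with s hs
      exact (h1 s ⟨hs.1.le, hs.2.le⟩).hasDerivAt (Icc_mem_nhds hs.1 hs.2)
    · rw [hx]
      exact (h2 r ⟨hr.1.le, hr.2.le⟩).hasDerivAt (Icc_mem_nhds hr.1 hr.2)
  have hT : ∀ {h : ℝ → ℝ}, ContinuousOn h (Icc 0 1) →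
      Tendsto h (nhdsWithin 1 (Ioo 0 1)) (nhds (h 1)) := fun hh =>
    (hh 1 hone).mono Ioo_subset_Icc_self
  have hid : Tendsto (fun r : ℝ => ((N : ℝ) - 1) / r) (nhdsWithin 1 (Ioo 0 1))
      (nhds (((N : ℝ) - 1) / 1)) :=
    (tendsto_const_nhds.div tendsto_id one_ne_zero).mono_left nhdsWithin_le_nhds
  have hlim := ((hT hc2.continuousOn).add (hid.mul (hT hc1.continuousOn))).add
    ((hT hu.continuousOn).rpow_const (p := p) (Or.inr hp.le))
  have hz : Tendsto (fun r => u2 r + ((N : ℝ) - 1) / r * u1 r + u r ^ p)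
      (nhdsWithin 1 (Ioo 0 1)) (nhds 0) :=
    tendsto_const_nhds.congr' (by
      filter_upwards [self_mem_nhdsWithin] with r hr
      exact (hode r hr).symm)
  have : (nhdsWithin (1 : ℝ) (Ioo 0 1)).NeBot := right_nhdsWithin_Ioo_neBot one_pos
  have := tendsto_nhds_unique hlim hz
  rw [hu1, hv1, Real.zero_rpow hp.ne'] at this
  linarith

/-- gluing a harmonic tail (`N ≥ 3`).  Let `0 < R < R_N` and
`A := -u'(1)/((N-2) R^{2/(p-1)-N+2}) > 0`.  The function `v` equal to the rescaled
Lane–Emden solution `R^{-2/(p-1)} u(|x|/R)` for `|x| ≤ R` and to the harmonic tail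
`A(|x|^{-(N-2)} - R^{-(N-2)})` for `R ≤ |x| ≤ R_N` is `C²` on the closed ball
`𝔻̄_N`, negative on the annulus `{R < |x| ≤ R_N}`, harmonic in `{R < |x| < R_N}`,
and satisfies `-Δv = [v]₊^p` in `𝔻_N`. -/
theorem harmonic_tail_gluing
    {N : ℕ} (hN : 3 ≤ N) (p : ℝ) (hp1 : 1 < p) (hpN : p < (N : ℝ) / ((N : ℝ) - 2))
    (RN : ℝ) (hRN : 0 < RN) (hvol : volume (Metric.ball (0 : Euc N) RN) = 1)
    (u : ℝ → ℝ) (u0 : Euc N → ℝ)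
    (hrad : ∀ x ∈ Metric.closedBall (0 : Euc N) 1, u0 x = u ‖x‖)
    (hreg : ContDiffOn ℝ 2 u0 (Metric.closedBall (0 : Euc N) 1))
    (heq : ∀ x ∈ Metric.ball (0 : Euc N) 1, -lap u0 x = u0 x ^ p)
    (hpos : ∀ x ∈ Metric.ball (0 : Euc N) 1, 0 < u0 x)
    (hu1 : u 1 = 0) (hu'1 : deriv u 1 < 0)
    (R : ℝ) (hR0 : 0 < R) (hRRN : R < RN) :
    0 < -(deriv u 1) / (((N : ℝ) - 2) * R ^ (2 / (p - 1) - (N : ℝ) + 2)) ∧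
    (ContDiffOn ℝ 2
      (fun x : Euc N => if ‖x‖ ≤ R then R ^ (-(2 / (p - 1))) * u (‖x‖ / R)
        else -(deriv u 1) / (((N : ℝ) - 2) * R ^ (2 / (p - 1) - (N : ℝ) + 2)) *
          (‖x‖ ^ (-((N : ℝ) - 2)) - R ^ (-((N : ℝ) - 2))))
      (Metric.closedBall (0 : Euc N) RN)) ∧
    (∀ x : Euc N, R < ‖x‖ → ‖x‖ ≤ RN →
      (if ‖x‖ ≤ R then R ^ (-(2 / (p - 1))) * u (‖x‖ / R)
        else -(deriv u 1) / (((N : ℝ) - 2) * R ^ (2 / (p - 1) - (N : ℝ) + 2)) *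
          (‖x‖ ^ (-((N : ℝ) - 2)) - R ^ (-((N : ℝ) - 2)))) < 0) ∧
    (∀ x : Euc N, R < ‖x‖ → ‖x‖ < RN →
      lap (fun x : Euc N => if ‖x‖ ≤ R then R ^ (-(2 / (p - 1))) * u (‖x‖ / R)
        else -(deriv u 1) / (((N : ℝ) - 2) * R ^ (2 / (p - 1) - (N : ℝ) + 2)) *
          (‖x‖ ^ (-((N : ℝ) - 2)) - R ^ (-((N : ℝ) - 2)))) x = 0) ∧
    ∀ x ∈ Metric.ball (0 : Euc N) RN,
      -lap (fun x : Euc N => if ‖x‖ ≤ R then R ^ (-(2 / (p - 1))) * u (‖x‖ / R)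
        else -(deriv u 1) / (((N : ℝ) - 2) * R ^ (2 / (p - 1) - (N : ℝ) + 2)) *
          (‖x‖ ^ (-((N : ℝ) - 2)) - R ^ (-((N : ℝ) - 2)))) x =
        (max ((if ‖x‖ ≤ R then R ^ (-(2 / (p - 1))) * u (‖x‖ / R)
        else -(deriv u 1) / (((N : ℝ) - 2) * R ^ (2 / (p - 1) - (N : ℝ) + 2)) *
          (‖x‖ ^ (-((N : ℝ) - 2)) - R ^ (-((N : ℝ) - 2))))) 0) ^ p := by
  have hn : (0 : ℝ) < (N : ℝ) - 2 := by
    have : (3 : ℝ) ≤ N := by exact_mod_cast hN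
    linarith
  have hE : 0 < R ^ (2 / (p - 1) - (N : ℝ) + 2) := Real.rpow_pos_of_pos hR0 _
  have hA : 0 < -(deriv u 1) / (((N : ℝ) - 2) * R ^ (2 / (p - 1) - (N : ℝ) + 2)) :=
    div_pos (neg_pos.2 hu'1) (mul_pos hn hE)
  have hd : DifferentiableAt ℝ u 1 := differentiableAt_of_deriv_ne_zero hu'1.ne
  obtain ⟨u1, u2, hu_1, hu_2, hu2c, hv1, hv2⟩ :=
    profile_derivs (by omega) (by linarith) hrad hreg heq hu1 hd
  have hc : 0 < R ^ (-(2 / (p - 1))) := Real.rpow_pos_of_pos hR0 _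
  -- `[v]₊^p` and `Δv` scale by the same power of `R`, as `(2/(p-1)) p = 2/(p-1) + 2`.
  have hcp : (R ^ (-(2 / (p - 1)))) ^ p = R ^ (-(2 / (p - 1))) * R⁻¹ ^ 2 := by
    rw [← Real.rpow_mul hR0.le, inv_pow, ← Real.rpow_natCast R 2, ← Real.rpow_neg hR0.le,
      ← Real.rpow_add hR0]
    congr 1
    have : p - 1 ≠ 0 := by linarith
    push_cast
    field_simp
    ring
  have hQ : R ^ (-((N : ℝ) - 2)) =
      R ^ (2 / (p - 1) - (N : ℝ) + 2) * R ^ (-(2 / (p - 1))) := by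
    rw [← Real.rpow_add hR0]
    congr 1
    ring
  have hAE : -(deriv u 1) / (((N : ℝ) - 2) * R ^ (2 / (p - 1) - (N : ℝ) + 2)) *
      (((N : ℝ) - 2) * R ^ (2 / (p - 1) - (N : ℝ) + 2)) = -(deriv u 1) :=
    div_mul_cancel₀ _ (mul_pos hn hE).ne'
  generalize -(deriv u 1) / (((N : ℝ) - 2) * R ^ (2 / (p - 1) - (N : ℝ) + 2)) = A at *
  generalize R ^ (2 / (p - 1) - (N : ℝ) + 2) = E at *
  generalize R ^ (-(2 / (p - 1))) = c at *
  set m : ℝ := -((N : ℝ) - 2) with hm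
  -- Inner and outer profiles with their first two derivatives.
  let f : ℝ → ℝ := fun r => c * u (r / R)
  let f1 : ℝ → ℝ := fun r => c / R * u1 (r / R)
  let f2 : ℝ → ℝ := fun r => c / R ^ 2 * u2 (r / R)
  let k : ℝ → ℝ := fun r => A * (r ^ m - R ^ m)
  let k1 : ℝ → ℝ := fun r => A * m * r ^ (m - 1)
  let k2 : ℝ → ℝ := fun r => A * m * (m - 1) * r ^ (m - 1 - 1)
  have hmap : MapsTo (fun r : ℝ => r / R) (Icc 0 R) (Icc 0 1) := fun r hr =>
    ⟨div_nonneg hr.1 hR0.le, (div_le_one hR0).2 hr.2⟩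
  have hdiv : ∀ r s, HasDerivWithinAt (fun r : ℝ => r / R) (1 / R) s r := fun r s =>
    ((hasDerivAt_id r).div_const R).hasDerivWithinAt
  have hf1 : ∀ r ∈ Ioc 0 R, HasDerivWithinAt f (f1 r) (Icc 0 R) r := by
    intro r hr
    have hr' : r ∈ Icc 0 R := ⟨hr.1.le, hr.2⟩
    refine HasDerivWithinAt.congr_deriv (((hu_1 _ (hmap hr')).comp r (hdiv r _) hmap).const_mul c) ?_
    simp only [f1]
    ring
  have hf2 : ∀ r ∈ Ioc 0 R, HasDerivWithinAt f1 (f2 r) (Icc 0 R) r := by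
    intro r hr
    have hr' : r ∈ Icc 0 R := ⟨hr.1.le, hr.2⟩
    refine HasDerivWithinAt.congr_deriv (((hu_2 _ (hmap hr')).comp r (hdiv r _) hmap).const_mul (c / R)) ?_
    simp only [f2]
    field_simp
  have hf2c : ContinuousOn f2 (Icc 0 R) :=
    continuousOn_const.mul (hu2c.comp (continuous_id.div_const R).continuousOn hmap)
  have hk1 : ∀ r, 0 < r → HasDerivAt k (k1 r) r := by
    intro r hr
    refine HasDerivAt.congr_deriv (((Real.hasDerivAt_rpow_const (p := m) (Or.inl hr.ne')).sub_const (R ^ m)).const_mul A) ?_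
    simp only [k1]
    ring
  have hk2 : ∀ r, 0 < r → HasDerivAt k1 (k2 r) r := by
    intro r hr
    refine HasDerivAt.congr_deriv ((Real.hasDerivAt_rpow_const (p := m - 1) (Or.inl hr.ne')).const_mul (A * m)) ?_
    simp only [k2]
    ring
  have hk2c : ∀ r, 0 < r → ContinuousAt k2 r := fun r hr =>
    continuousAt_const.mul (Real.continuousAt_rpow_const r _ (Or.inl hr.ne'))
  have hRR : R / R = 1 := div_self hR0.ne'
  have hj0 : f R = k R := by simp [f, k, hRR, hu1]
  have hj1 : f1 R = k1 R := by
    simp only [f1, k1, hRR, hv1, Real.rpow_sub_one hR0.ne', hQ]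
    have : deriv u 1 = A * m * E := by rw [hm]; linarith
    rw [this]
    ring
  have hj2 : f2 R = k2 R := by
    simp only [f2, k2, hRR, hv2, Real.rpow_sub_one hR0.ne', hQ]
    have : deriv u 1 = A * m * E := by rw [hm]; linarith
    rw [this, show (N : ℝ) = 2 - m by rw [hm]; ring]
    field_simp
    ring
  have hg1 : ∀ r, 0 < r → HasDerivAt (fun s => if s ≤ R then f s else k s)
      (if r ≤ R then f1 r else k1 r) r := fun r hr => hasDerivAt_glue hf1 hk1 hj0 hj1 hr
  have hg2 : ∀ r, 0 < r → HasDerivAt (fun s => if s ≤ R then f1 s else k1 s)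
      (if r ≤ R then f2 r else k2 r) r := fun r hr => hasDerivAt_glue hf2 hk2 hj1 hj2 hr
  have hg2c : ∀ r, 0 < r → ContinuousAt (fun s => if s ≤ R then f2 s else k2 s) r :=
    fun r hr => continuousAt_glue hf2c hk2c hj2 hr
  -- Inside `B_R` the glued function is a rescaling of `u0`, also near the origin.
  have hin : ∀ x : Euc N, ‖x‖ < R →
      (fun x : Euc N => if ‖x‖ ≤ R then c * u (‖x‖ / R) else A * (‖x‖ ^ m - R ^ m))
        =ᶠ[nhds x] fun y => c * u0 (R⁻¹ • y) := by
    intro x hx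
    have : Metric.ball (0 : Euc N) R ∈ nhds x :=
      Metric.isOpen_ball.mem_nhds (mem_ball_zero_iff.2 hx)
    filter_upwards [this] with y hy
    rw [mem_ball_zero_iff] at hy
    have hny : ‖R⁻¹ • y‖ = ‖y‖ / R := by
      rw [norm_smul, Real.norm_of_nonneg (inv_pos.2 hR0).le, inv_mul_eq_div]
    rw [if_pos hy.le, hrad, hny]
    rw [mem_closedBall_zero_iff, hny, div_le_one hR0]
    exact hy.le
  have hball : ∀ x : Euc N, ‖x‖ < R → R⁻¹ • x ∈ Metric.ball (0 : Euc N) 1 := by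
    intro x hx
    rw [mem_ball_zero_iff, norm_smul, Real.norm_of_nonneg (inv_pos.2 hR0).le, inv_mul_eq_div,
      div_lt_one hR0]
    exact hx
  have hlap : ∀ x : Euc N, R ≤ ‖x‖ →
      lap (fun x : Euc N => if ‖x‖ ≤ R then c * u (‖x‖ / R) else A * (‖x‖ ^ m - R ^ m)) x = 0 := by
    intro x hx
    have hx0 : 0 < ‖x‖ := hR0.trans_le hx
    have h1 := lap_radial (norm_pos_iff.1 hx0)
      (by filter_upwards [Ioi_mem_nhds hx0] with r hr using hg1 r hr) (hg2 _ hx0)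
    have e1 : (if ‖x‖ ≤ R then f1 ‖x‖ else k1 ‖x‖) = k1 ‖x‖ := by
      split_ifs with h
      · rw [le_antisymm h hx, hj1]
      · rfl
    have e2 : (if ‖x‖ ≤ R then f2 ‖x‖ else k2 ‖x‖) = k2 ‖x‖ := by
      split_ifs with h
      · rw [le_antisymm h hx, hj2]
      · rfl
    rw [e1, e2] at h1
    refine h1.trans ?_
    simp only [k1, k2]
    rw [Real.rpow_sub_one hx0.ne' (m - 1), show (N : ℝ) = 2 - m by rw [hm]; ring]
    field_simp
    ring
  have hneg : ∀ x : Euc N, R < ‖x‖ → A * (‖x‖ ^ m - R ^ m) < 0 := fun x hx =>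
    mul_neg_of_pos_of_neg hA (sub_neg.2 (Real.rpow_lt_rpow_of_neg hR0 hx (by linarith)))
  refine ⟨hA, fun x _ => ContDiffAt.contDiffWithinAt ?_, fun x hx _ => ?_,
    fun x hx _ => hlap x hx.le, fun x _ => ?_⟩
  · rcases lt_or_ge ‖x‖ R with hx | hx
    · refine ContDiffAt.congr_of_eventuallyEq ?_ (hin x hx)
      have h0 : ContDiffAt ℝ 2 u0 (R⁻¹ • x) := hreg.contDiffAt
        (mem_of_superset (Metric.isOpen_ball.mem_nhds (hball x hx)) Metric.ball_subset_closedBall)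
      exact contDiffAt_const.mul
        (h0.comp x (contDiff_const_smul (R⁻¹ : ℝ)).contDiffAt)
    · have hx0 : 0 < ‖x‖ := hR0.trans_le hx
      exact (contDiffAt_two_of_hasDerivAt hg1 hg2 hg2c hx0).comp x
        (contDiffAt_norm ℝ (norm_pos_iff.1 hx0))
  · rw [if_neg hx.not_ge]
    exact hneg x hx
  · rcases lt_or_ge ‖x‖ R with hx | hx
    · have hb := hball x hx
      have hval := (hin x hx).eq_of_nhds
      rw [hval, lap_congr (hin x hx), lap_scale, max_eq_left (mul_pos hc (hpos _ hb)).le,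
        Real.mul_rpow hc.le (hpos _ hb).le, ← heq _ hb, hcp]
      ring
    · rw [hlap x hx]
      have hle : (if ‖x‖ ≤ R then c * u (‖x‖ / R) else A * (‖x‖ ^ m - R ^ m)) ≤ 0 := by
        split_ifs with h
        · rw [le_antisymm h hx, hRR, hu1, mul_zero]
        · exact (hneg x (not_le.1 h)).le
      rw [max_eq_right hle, Real.zero_rpow (by linarith), neg_zero]


end
end

section
/- For N = 2 the function 𝓘(R) := R^{−2/(p−1)} · 2π ∫₀^{min(1, R₂/R)} t u(t)^p dt is twice continuously differentiable on (0, +∞); consequently its inverse function (where defined) is also twice continuously differentiable. -/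
/-!
Write `s = R₂ / R` and `g t = t * u t ^ p`, so that `𝓘 R = R ^ a * (2π * H s)` with
`a = -2/(p-1) < 0` and `H s = ∫₀^{min 1 s} g`. Since `u 1 = 0`, the function `g` extends continuously
by `0` beyond `t = 1`, and `H` is a primitive of that extension `massDensity`. The only delicate point
is `s = 1`: the left derivative of `g` there is `u 1 ^ p + p * u 1 ^ (p-1) * u' 1`, which vanishes
because `p > 1`, so it matches the zero derivative on the right. Hence `massDensity` is `C¹`
(`hasDerivAt_massDensity`), `H` is `C²` (`contDiffOn_mass`), and so is `𝓘`.

For the inverse, `𝓘' = 2π (a R ^ (a-1) H(s) - R ^ a g(s) R₂ / R²) < 0`, because `a < 0`, `H > 0` and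
`g ≥ 0` (`exists_hasDerivAt_scrI_neg`). The inverse function theorem gives a `C²` local inverse at
each point of the image, and every left inverse `J` agrees with it locally.
-/

open MeasureTheory Set Filter

noncomputable section

/-- The planar mass function `𝓘(R) = R^{-2/(p-1)} · 2π ∫₀^{min(1, R₂/R)} t u(t)^p dt`. -/
def scrI (p R2 : ℝ) (u : ℝ → ℝ) (R : ℝ) : ℝ :=
  R ^ (-(2 / (p - 1))) * (2 * Real.pi * ∫ t in (0 : ℝ)..(min 1 (R2 / R)), t * u t ^ p)

/-- The integrand `t * u t ^ p` on `[0, 1]`, extended to the line by its endpoint values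
(both are `0` when `u 1 = 0` and `p ≠ 0`). -/
def massDensity (p : ℝ) (u : ℝ → ℝ) (s : ℝ) : ℝ :=
  max 0 (min 1 s) * u (max 0 (min 1 s)) ^ p

/-- The derivative of `t * u t ^ p` on `[0, 1]`, extended to the line by its endpoint values. -/
def massDensityDeriv (p : ℝ) (u : ℝ → ℝ) (s : ℝ) : ℝ :=
  u (max 0 (min 1 s)) ^ p + max 0 (min 1 s) *
    (derivWithin u (Icc 0 1) (max 0 (min 1 s)) * p * u (max 0 (min 1 s)) ^ (p - 1))

lemma clip_mem (s : ℝ) : max 0 (min 1 s) ∈ Icc (0 : ℝ) 1 :=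
  ⟨le_max_left _ _, max_le zero_le_one (min_le_left _ _)⟩

lemma clip_of_mem {s : ℝ} (hs : s ∈ Icc (0 : ℝ) 1) : max 0 (min 1 s) = s := by
  rw [min_eq_right hs.2, max_eq_right hs.1]

lemma clip_of_one_le {s : ℝ} (hs : 1 ≤ s) : max 0 (min 1 s) = 1 := by
  rw [min_eq_left hs, max_eq_right zero_le_one]

section

variable {p : ℝ} {u : ℝ → ℝ}

lemma continuous_massDensity (hp : 1 < p) (hreg : ContDiffOn ℝ 2 u (Icc 0 1)) :
    Continuous (massDensity p u) := by
  have hc : Continuous fun s : ℝ => max 0 (min 1 s) := by fun_prop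
  exact hc.mul ((hreg.continuousOn.comp_continuous hc clip_mem).rpow_const
    fun _ => Or.inr (by linarith))

lemma continuous_massDensityDeriv (hp : 1 < p) (hreg : ContDiffOn ℝ 2 u (Icc 0 1)) :
    Continuous (massDensityDeriv p u) := by
  have hc : Continuous fun s : ℝ => max 0 (min 1 s) := by fun_prop
  have hu := hreg.continuousOn.comp_continuous hc clip_mem
  have hd := (hreg.continuousOn_derivWithin (uniqueDiffOn_Icc zero_lt_one)
    (by norm_num)).comp_continuous hc clip_mem
  exact (hu.rpow_const fun _ => Or.inr (by linarith)).add
    (hc.mul ((hd.mul continuous_const).mul (hu.rpow_const fun _ => Or.inr (by linarith))))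

lemma massDensity_nonneg (hpos : ∀ r ∈ Ico (0 : ℝ) 1, 0 < u r) (hu1 : u 1 = 0) (s : ℝ) :
    0 ≤ massDensity p u s := by
  have hm := clip_mem s
  refine mul_nonneg hm.1 (Real.rpow_nonneg ?_ _)
  rcases hm.2.lt_or_eq with h | h
  · exact (hpos _ ⟨hm.1, h⟩).le
  · rw [h, hu1]

/-- At `s = 1` the one-sided derivatives are glued: the left one vanishes since `u 1 = 0` and
`p > 1`. -/
lemma hasDerivAt_massDensity (hp : 1 < p) (hreg : ContDiffOn ℝ 2 u (Icc 0 1)) (hu1 : u 1 = 0)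
    {s : ℝ} (hs : 0 < s) : HasDerivAt (massDensity p u) (massDensityDeriv p u s) s := by
  have hin : ∀ t ∈ Icc (0 : ℝ) 1,
      HasDerivWithinAt (massDensity p u) (massDensityDeriv p u t) (Icc 0 1) t := by
    intro t ht
    have hu : HasDerivWithinAt u (derivWithin u (Icc 0 1) t) (Icc 0 1) t :=
      (hreg.differentiableOn (by norm_num) t ht).hasDerivWithinAt
    have h := (hasDerivWithinAt_id t (Icc 0 1)).mul
      (hu.rpow_const (p := p) (Or.inr hp.le))
    refine (h.congr_of_mem (fun y hy => ?_) ht).congr_deriv ?_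
    · simp only [massDensity, clip_of_mem hy, Pi.mul_apply, id]
    · simp only [massDensityDeriv, clip_of_mem ht, id, one_mul]
  have hD1 : ∀ t : ℝ, 1 ≤ t → massDensityDeriv p u t = 0 := by
    intro t ht
    simp only [massDensityDeriv, clip_of_one_le ht, hu1]
    rw [Real.zero_rpow (by linarith), Real.zero_rpow (by linarith)]
    simp
  have hout : ∀ t ∈ Ici (1 : ℝ),
      HasDerivWithinAt (massDensity p u) (massDensityDeriv p u t) (Ici 1) t := by
    intro t ht
    rw [hD1 t ht]
    refine (hasDerivWithinAt_const t (Ici 1) (0 : ℝ)).congr_of_mem (fun y hy => ?_) ht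
    simp only [massDensity, clip_of_one_le hy, hu1]
    rw [Real.zero_rpow (by linarith), mul_zero]
  rcases lt_trichotomy s 1 with h | rfl | h
  · exact (hin s ⟨hs.le, h.le⟩).hasDerivAt (Icc_mem_nhds hs h)
  · refine ((hin 1 ⟨zero_le_one, le_rfl⟩).union (hout 1 self_mem_Ici)).hasDerivAt ?_
    rw [Icc_union_Ici_eq_Ici zero_le_one]
    exact Ici_mem_nhds zero_lt_one
  · exact (hout s h.le).hasDerivAt (Ici_mem_nhds h)

lemma contDiffOn_massDensity (hp : 1 < p) (hreg : ContDiffOn ℝ 2 u (Icc 0 1)) (hu1 : u 1 = 0) :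
    ContDiffOn ℝ 1 (massDensity p u) (Ioi 0) := by
  rw [show (1 : WithTop ℕ∞) = 0 + 1 from rfl, contDiffOn_succ_iff_deriv_of_isOpen isOpen_Ioi]
  refine ⟨fun s hs =>
    (hasDerivAt_massDensity hp hreg hu1 hs).differentiableAt.differentiableWithinAt, by simp, ?_⟩
  exact contDiffOn_zero.2 ((continuous_massDensityDeriv hp hreg).continuousOn.congr
    fun s hs => (hasDerivAt_massDensity hp hreg hu1 hs).deriv)

lemma integral_min_eq (hp : 1 < p) (hreg : ContDiffOn ℝ 2 u (Icc 0 1)) (hu1 : u 1 = 0)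
    {s : ℝ} (hs : 0 < s) :
    ∫ t in (0 : ℝ)..(min 1 s), t * u t ^ p = ∫ t in (0 : ℝ)..s, massDensity p u t := by
  have hi : ∀ a b, IntervalIntegrable (massDensity p u) volume a b :=
    fun a b => (continuous_massDensity hp hreg).intervalIntegrable a b
  have hm : (0 : ℝ) ≤ min 1 s := le_min zero_le_one hs.le
  rw [← intervalIntegral.integral_add_adjacent_intervals (hi 0 (min 1 s)) (hi (min 1 s) s)]
  have h1 : ∫ t in (0 : ℝ)..(min 1 s), t * u t ^ p = ∫ t in (0 : ℝ)..(min 1 s), massDensity p u t := by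
    refine intervalIntegral.integral_congr fun t ht => ?_
    rw [uIcc_of_le hm] at ht
    simp only [massDensity, clip_of_mem ⟨ht.1, ht.2.trans (min_le_left _ _)⟩]
  have h2 : ∫ t in (min 1 s)..s, massDensity p u t = 0 := by
    rcases le_total s 1 with h | h
    · rw [min_eq_right h, intervalIntegral.integral_same]
    · rw [min_eq_left h]
      refine (intervalIntegral.integral_congr (g := fun _ => (0 : ℝ)) fun t ht => ?_).trans
        intervalIntegral.integral_zero
      rw [uIcc_of_le h] at ht
      simp only [massDensity, clip_of_one_le ht.1, hu1]
      rw [Real.zero_rpow (by linarith), mul_zero]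
  rw [h1, h2, add_zero]

lemma hasDerivAt_mass (hp : 1 < p) (hreg : ContDiffOn ℝ 2 u (Icc 0 1)) (s : ℝ) :
    HasDerivAt (fun s => ∫ t in (0 : ℝ)..s, massDensity p u t) (massDensity p u s) s :=
  (continuous_massDensity hp hreg).integral_hasStrictDerivAt 0 s |>.hasDerivAt

lemma contDiffOn_mass (hp : 1 < p) (hreg : ContDiffOn ℝ 2 u (Icc 0 1)) (hu1 : u 1 = 0) :
    ContDiffOn ℝ 2 (fun s => ∫ t in (0 : ℝ)..s, massDensity p u t) (Ioi 0) := by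
  rw [show (2 : WithTop ℕ∞) = 1 + 1 from (one_add_one_eq_two).symm,
    contDiffOn_succ_iff_deriv_of_isOpen isOpen_Ioi]
  exact ⟨fun s _ => (hasDerivAt_mass hp hreg s).differentiableAt.differentiableWithinAt, by simp,
    (contDiffOn_massDensity hp hreg hu1).congr fun s _ => (hasDerivAt_mass hp hreg s).deriv⟩

lemma mass_pos (hp : 1 < p) (hreg : ContDiffOn ℝ 2 u (Icc 0 1))
    (hpos : ∀ r ∈ Ico (0 : ℝ) 1, 0 < u r) (hu1 : u 1 = 0) {s : ℝ} (hs : 0 < s) :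
    0 < ∫ t in (0 : ℝ)..s, massDensity p u t := by
  rw [← integral_min_eq hp hreg hu1 hs]
  have hm : (0 : ℝ) < min 1 s := lt_min zero_lt_one hs
  refine intervalIntegral.intervalIntegral_pos_of_pos_on ?_ (fun t ht => ?_) hm
  · refine ContinuousOn.intervalIntegrable ?_
    rw [uIcc_of_le hm.le]
    have hu := hreg.continuousOn.mono (Icc_subset_Icc_right (min_le_left 1 s))
    exact continuousOn_id.mul (hu.rpow_const fun _ _ => Or.inr (by linarith))
  · exact mul_pos ht.1 (Real.rpow_pos_of_pos
      (hpos t ⟨ht.1.le, ht.2.trans_le (min_le_left _ _)⟩) _)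

lemma scrI_eq (hp : 1 < p) (hreg : ContDiffOn ℝ 2 u (Icc 0 1)) (hu1 : u 1 = 0)
    {R2 : ℝ} (hR2 : 0 < R2) {R : ℝ} (hR : 0 < R) :
    scrI p R2 u R = R ^ (-(2 / (p - 1))) *
      (2 * Real.pi * ∫ t in (0 : ℝ)..(R2 / R), massDensity p u t) := by
  rw [scrI, integral_min_eq hp hreg hu1 (div_pos hR2 hR)]

lemma contDiffOn_scrI (hp : 1 < p) (hreg : ContDiffOn ℝ 2 u (Icc 0 1)) (hu1 : u 1 = 0)
    {R2 : ℝ} (hR2 : 0 < R2) : ContDiffOn ℝ 2 (scrI p R2 u) (Ioi 0) := by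
  have hdiv : ContDiffOn ℝ 2 (fun R : ℝ => R2 / R) (Ioi 0) :=
    contDiffOn_const.div contDiffOn_id fun R hR => (ne_of_gt hR : R ≠ 0)
  have hH := (contDiffOn_mass hp hreg hu1).comp hdiv fun R hR => div_pos hR2 hR
  have hpow : ContDiffOn ℝ 2 (fun R : ℝ => R ^ (-(2 / (p - 1)))) (Ioi 0) :=
    contDiffOn_id.rpow_const_of_ne fun R hR => (ne_of_gt hR : R ≠ 0)
  exact (hpow.mul (contDiffOn_const.mul hH)).congr fun R hR => scrI_eq hp hreg hu1 hR2 hR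

lemma exists_hasDerivAt_scrI_neg (hp : 1 < p) (hreg : ContDiffOn ℝ 2 u (Icc 0 1))
    (hpos : ∀ r ∈ Ico (0 : ℝ) 1, 0 < u r) (hu1 : u 1 = 0)
    {R2 : ℝ} (hR2 : 0 < R2) {R : ℝ} (hR : 0 < R) :
    ∃ d < 0, HasDerivAt (scrI p R2 u) d R := by
  have hpow := Real.hasDerivAt_rpow_const (x := R) (p := -(2 / (p - 1))) (Or.inl hR.ne')
  have hdiv : HasDerivAt (fun R : ℝ => R2 / R) (-(R2 / R ^ 2)) R := by
    have h := (hasDerivAt_inv hR.ne').const_mul R2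
    simp only [← div_eq_mul_inv] at h
    exact h.congr_deriv (by ring)
  have hH := (hasDerivAt_mass hp hreg (R2 / R)).comp R hdiv
  have h := hpow.mul (hH.const_mul (2 * Real.pi))
  refine ⟨_, ?_, h.congr_of_eventuallyEq ?_⟩
  · have ha : -(2 / (p - 1)) < 0 := neg_lt_zero.2 (div_pos two_pos (by linarith))
    have hM := mass_pos hp hreg hpos hu1 (div_pos hR2 hR)
    have hg := massDensity_nonneg (p := p) hpos hu1 (R2 / R)
    have hpi : 0 < 2 * Real.pi := by positivity
    refine add_neg_of_neg_of_nonpos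
      (mul_neg_of_neg_of_pos (mul_neg_of_neg_of_pos ha (Real.rpow_pos_of_pos hR _))
        (mul_pos hpi hM))
      (mul_nonpos_of_nonneg_of_nonpos (Real.rpow_pos_of_pos hR _).le
        (mul_nonpos_of_nonneg_of_nonpos hpi.le (mul_nonpos_of_nonneg_of_nonpos hg ?_)))
    exact neg_nonpos.2 (by positivity)
  · filter_upwards [Ioi_mem_nhds hR] with x hx
    exact scrI_eq hp hreg hu1 hR2 hx

end

/-- A left inverse on an open set of a `C²` function with nonvanishing derivative is `C²` on the
image, since it agrees locally with the inverse given by the inverse function theorem. -/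
lemma contDiffOn_leftInverse {f J : ℝ → ℝ} {s : Set ℝ} (hs : IsOpen s)
    (hf : ContDiffOn ℝ 2 f s) (hd : ∀ x ∈ s, ∃ d ≠ 0, HasDerivAt f d x)
    (hJ : ∀ x ∈ s, J (f x) = x) : ContDiffOn ℝ 2 J (f '' s) := by
  rintro _ ⟨x, hx, rfl⟩
  obtain ⟨d, hd0, hdx⟩ := hd x hx
  have hfx : ContDiffAt ℝ 2 f x := hf.contDiffAt (hs.mem_nhds hx)
  have hfd : HasFDerivAt f
      ((ContinuousLinearEquiv.unitsEquivAut ℝ (Units.mk0 d hd0) : ℝ ≃L[ℝ] ℝ) : ℝ →L[ℝ] ℝ) x :=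
    hdx.hasFDerivAt_equiv hd0
  have huniq := (hfx.hasStrictFDerivAt' hfd two_ne_zero).localInverse_unique (g := J)
    (by filter_upwards [hs.mem_nhds hx] with y hy using hJ y hy)
  exact ((hfx.to_localInverse hfd two_ne_zero).congr_of_eventuallyEq huniq).contDiffWithinAt

/-- for `N = 2` the function `𝓘` is twice continuously differentiable on
`(0, +∞)`; consequently its inverse function (where defined) is also twice continuously
differentiable. -/
theorem scrI_contDiff_two
    (p : ℝ) (hp : 1 < p) (R2 : ℝ) (hR2 : R2 = Real.pi ^ (-(1 / 2) : ℝ))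
    (u : ℝ → ℝ)
    (hreg : ContDiffOn ℝ 2 u (Icc 0 1))
    (hpos : ∀ r ∈ Ico (0 : ℝ) 1, 0 < u r)
    (hu1 : u 1 = 0)
    (hu' : ∀ r ∈ Ioc (0 : ℝ) 1, deriv u r < 0)
    (hu'0 : deriv u 0 = 0)
    (hode : ∀ r ∈ Ioo (0 : ℝ) 1,
      deriv (deriv u) r + (1 / r) * deriv u r = -(u r ^ p)) :
    ContDiffOn ℝ 2 (scrI p R2 u) (Ioi 0) ∧
      ∀ J : ℝ → ℝ, (∀ R ∈ Ioi (0 : ℝ), J (scrI p R2 u R) = R) →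
        ContDiffOn ℝ 2 J (scrI p R2 u '' Ioi 0) := by
  have hR2pos : 0 < R2 := hR2 ▸ Real.rpow_pos_of_pos Real.pi_pos _
  have hC := contDiffOn_scrI hp hreg hu1 hR2pos
  refine ⟨hC, fun J hJ => contDiffOn_leftInverse isOpen_Ioi hC (fun R hR => ?_) hJ⟩
  obtain ⟨d, hd, hdR⟩ := exists_hasDerivAt_scrI_neg hp hreg hpos hu1 hR2pos hR
  exact ⟨d, hd.ne, hdR⟩

end
end

section
/- For N = 2 the function 𝓘(R) := R^{−2/(p−1)} · 2π ∫₀^{min(1, R₂/R)} t u(t)^p dt is strictly decreasing on (0, +∞), with 𝓘(R) → +∞ as R → 0⁺ and 𝓘(R) → 0 as R → +∞; hence 𝓘 is a bijection from (0, +∞) onto (0, +∞). -/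
/-!
Write `𝓘(R) = R^{-a} · J(R)` with `a = 2/(p-1) > 0` and `J(R) = 2π F(min(1, R₂/R))`, where
`F(s) = ∫₀^s t u(t)^p dt`. Since the integrand is continuous on `[0,1]` and positive on `(0,1)`,
the primitive `F` is continuous, nondecreasing and positive on `(0,1]` (`primitive_facts`). Hence
`J` is continuous, positive, nonincreasing, bounded by `2π F(1)`, and equal to `2π F(1)` for
`R ≤ R₂`. Multiplying by `R^{-a}`, which decreases strictly from `+∞` to `0`, gives strict
monotonicity and both limits; the bijection follows from the intermediate value theorem.
-/

open MeasureTheory Set Filter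

noncomputable section

/-- The properties of the primitive `s ↦ ∫₀^s t u(t)^p dt` behind the behaviour of `𝓘`; they hold
because the integrand is continuous on `[0,1]` and positive on `(0,1)`. -/
theorem primitive_facts (p : ℝ) (hp : 1 < p) (u : ℝ → ℝ) (hu : ContinuousOn u (Icc 0 1))
    (hpos : ∀ r ∈ Ico (0 : ℝ) 1, 0 < u r) :
    ContinuousOn (fun s => ∫ t in (0 : ℝ)..s, t * u t ^ p) (Icc 0 1) ∧
    (∀ s ∈ Ioc (0 : ℝ) 1, 0 < ∫ t in (0 : ℝ)..s, t * u t ^ p) ∧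
    MonotoneOn (fun s => ∫ t in (0 : ℝ)..s, t * u t ^ p) (Icc 0 1) := by
  have hg : ContinuousOn (fun t => t * u t ^ p) (Icc 0 1) :=
    continuousOn_id.mul (hu.rpow_const fun x _ => Or.inr (by linarith))
  have hint : ∀ a ∈ Icc (0 : ℝ) 1, ∀ b ∈ Icc (0 : ℝ) 1,
      IntervalIntegrable (fun t => t * u t ^ p) volume a b := fun a ha b hb =>
    (hg.mono (uIcc_subset_Icc ha hb)).intervalIntegrable
  have hgpos : ∀ t ∈ Ioo (0 : ℝ) 1, 0 < t * u t ^ p := fun t ht =>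
    mul_pos ht.1 (Real.rpow_pos_of_pos (hpos t ⟨ht.1.le, ht.2⟩) _)
  have h0 : (0 : ℝ) ∈ Icc (0 : ℝ) 1 := ⟨le_rfl, zero_le_one⟩
  have h1 : (1 : ℝ) ∈ Icc (0 : ℝ) 1 := ⟨zero_le_one, le_rfl⟩
  have hIpos : ∀ a ∈ Icc (0 : ℝ) 1, ∀ b ∈ Icc (0 : ℝ) 1, a < b →
      0 < ∫ t in a..b, t * u t ^ p := fun a ha b hb hab =>
    intervalIntegral.intervalIntegral_pos_of_pos_on (hint a ha b hb)
      (fun t ht => hgpos t ⟨ha.1.trans_lt ht.1, ht.2.trans_le hb.2⟩) hab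
  refine ⟨?_, fun s hs => hIpos 0 h0 s ⟨hs.1.le, hs.2⟩ hs.1, ?_⟩
  · have h := intervalIntegral.continuousOn_primitive_interval' (hint 0 h0 1 h1) left_mem_uIcc
    rwa [uIcc_of_le zero_le_one] at h
  · intro a ha b hb hab
    rcases hab.eq_or_lt with rfl | hlt
    · exact le_rfl
    · have h := intervalIntegral.integral_add_adjacent_intervals (hint 0 h0 a ha) (hint a ha b hb)
      have h' := hIpos a ha b hb hlt
      dsimp only
      linarith

/-- for `N = 2` the function `𝓘` is strictly decreasing on `(0, +∞)`,
tends to `+∞` as `R → 0⁺` and to `0` as `R → +∞`; hence it is a bijection from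
`(0, +∞)` onto `(0, +∞)`. -/
theorem scrI_strictAnti_bijective
    (p : ℝ) (hp : 1 < p) (R2 : ℝ) (hR2 : R2 = Real.pi ^ (-(1 / 2) : ℝ))
    (u : ℝ → ℝ)
    (hreg : ContDiffOn ℝ 2 u (Icc 0 1))
    (hpos : ∀ r ∈ Ico (0 : ℝ) 1, 0 < u r)
    (hu1 : u 1 = 0)
    (hu' : ∀ r ∈ Ioc (0 : ℝ) 1, deriv u r < 0)
    (hu'0 : deriv u 0 = 0)
    (hode : ∀ r ∈ Ioo (0 : ℝ) 1,
      deriv (deriv u) r + (1 / r) * deriv u r = -(u r ^ p)) :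
    StrictAntiOn (scrI p R2 u) (Ioi 0) ∧
    Tendsto (scrI p R2 u) (nhdsWithin 0 (Ioi 0)) atTop ∧
    Tendsto (scrI p R2 u) atTop (nhds 0) ∧
    BijOn (scrI p R2 u) (Ioi 0) (Ioi 0) := by
  obtain ⟨hFc, hFpos, hFmono⟩ := primitive_facts p hp u hreg.continuousOn hpos
  have hR2pos : 0 < R2 := hR2 ▸ Real.rpow_pos_of_pos Real.pi_pos _
  set F : ℝ → ℝ := fun s => ∫ t in (0 : ℝ)..s, t * u t ^ p with hF
  set a : ℝ := 2 / (p - 1) with ha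
  have hapos : 0 < a := div_pos two_pos (by linarith)
  have hpi : 0 < 2 * Real.pi := by positivity
  have hI : ∀ R, scrI p R2 u R = R ^ (-a) * (2 * Real.pi * F (min 1 (R2 / R))) := fun R => rfl
  have hm : ∀ R ∈ Ioi (0 : ℝ), min 1 (R2 / R) ∈ Ioc (0 : ℝ) 1 := fun R hR =>
    ⟨lt_min one_pos (div_pos hR2pos hR), min_le_left _ _⟩
  have hJpos : ∀ R ∈ Ioi (0 : ℝ), 0 < 2 * Real.pi * F (min 1 (R2 / R)) := fun R hR =>
    mul_pos hpi (hFpos _ (hm R hR))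
  have hIpos : ∀ R ∈ Ioi (0 : ℝ), 0 < scrI p R2 u R := fun R hR =>
    mul_pos (Real.rpow_pos_of_pos hR _) (hJpos R hR)
  have hanti : StrictAntiOn (scrI p R2 u) (Ioi 0) := by
    intro R hR S hS hRS
    have hpow : S ^ (-a) < R ^ (-a) := Real.rpow_lt_rpow_of_neg hR hRS (by linarith)
    have hmin : min 1 (R2 / S) ≤ min 1 (R2 / R) :=
      min_le_min_left _ (div_le_div_of_nonneg_left hR2pos.le hR hRS.le)
    have hJ := hFmono (Ioc_subset_Icc_self (hm S hS)) (Ioc_subset_Icc_self (hm R hR)) hmin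
    rw [hI, hI]
    exact mul_lt_mul hpow (mul_le_mul_of_nonneg_left hJ hpi.le) (hJpos S hS)
      (Real.rpow_pos_of_pos hR _).le
  have hzero : Tendsto (scrI p R2 u) (nhdsWithin 0 (Ioi 0)) atTop := by
    have h := (tendsto_rpow_neg_nhdsGT_zero (neg_lt_zero.2 hapos)).atTop_mul_const
      (mul_pos hpi (hFpos 1 ⟨one_pos, le_rfl⟩))
    refine h.congr' ?_
    filter_upwards [Ioo_mem_nhdsGT hR2pos] with R hR
    rw [hI, min_eq_left ((one_le_div hR.1).2 hR.2.le)]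
  have htop : Tendsto (scrI p R2 u) atTop (nhds 0) := by
    have h := (tendsto_rpow_neg_atTop hapos).mul_const (2 * Real.pi * F 1)
    rw [zero_mul] at h
    refine squeeze_zero' ?_ ?_ h
    · filter_upwards [Ioi_mem_atTop 0] with R hR using (hIpos R hR).le
    · filter_upwards [Ioi_mem_atTop 0] with R hR
      have hJ := hFmono (Ioc_subset_Icc_self (hm R hR)) ⟨zero_le_one, le_rfl⟩ (hm R hR).2
      exact mul_le_mul_of_nonneg_left (mul_le_mul_of_nonneg_left hJ hpi.le)
        (Real.rpow_pos_of_pos hR _).le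
  have hcont : ContinuousOn (scrI p R2 u) (Ioi 0) := by
    have hmc : ContinuousOn (fun R : ℝ => min 1 (R2 / R)) (Ioi 0) :=
      ContinuousOn.inf continuousOn_const (continuousOn_const.div continuousOn_id fun R hR => ne_of_gt hR)
    have hpow : ContinuousOn (fun R : ℝ => R ^ (-a)) (Ioi 0) :=
      continuousOn_id.rpow_const fun R hR => Or.inl (ne_of_gt hR)
    exact hpow.mul (continuousOn_const.mul
      (hFc.comp hmc fun R hR => Ioc_subset_Icc_self (hm R hR)))
  refine ⟨hanti, hzero, htop, hIpos, hanti.injOn, fun y hy => ?_⟩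
  obtain ⟨r, hyr, hr⟩ :=
    ((hzero.eventually_ge_atTop y).and (self_mem_nhdsWithin (s := Ioi (0 : ℝ)))).exists
  obtain ⟨s, hys, hs⟩ :=
    ((htop.eventually_lt_const (mem_Ioi.1 hy)).and (Ioi_mem_atTop (0 : ℝ))).exists
  exact isPreconnected_Ioi.intermediate_value hs hr hcont ⟨hys.le, hyr⟩

end
end

section
/- For N ≥ 3 the function 𝓘_N(R) := R^{−(2/(p−1) − N + 2)} · N ω_N ∫₀^{min(1, R_N/R)} t^{N−1} u(t)^p dt is twice continuously differentiable and strictly decreasing on (0, +∞), with 𝓘_N(R) → +∞ as R → 0⁺ and 𝓘_N(R) → 0 as R → +∞ (note 2/(p−1) − N + 2 = ((N−2)/(p−1))(p_N − p) > 0 since p < p_N); consequently its inverse function is also twice continuously differentiable on (0, +∞). -/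
/-!
Write `𝓘_N(R) = c R^{-α} F(R_N/R)` with `α = 2/(p-1) - N + 2`, `c = N ω_N` and
`F(x) = ∫₀^{min(1,x)} t^{N-1} u(t)^p dt`. The condition `p < N/(N-2)` is equivalent to `α > 0`.

The only delicate regularity point is `x = 1`, where the upper limit stops growing. On `[0,1]` the
integrand `f` is `C¹` up to the boundary because `p > 1` and `N - 1 ≥ 1`, and both `f` and `f'`
vanish at `1`: every term contains `u^p` or `u^{p-1}`, and `u(1) = 0`. Hence freezing the primitive
of `f` beyond `1` keeps it `C²` (`contDiffOn_comp_min`), and `𝓘_N` is `C²`.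

Since `F > 0`, `F' ≥ 0` and `α > 0`, the product rule gives `𝓘_N' < 0`. The limits follow from
`F = F(1)` near `+∞` and `0 < F ≤ F(1)`. Finally `𝓘_N` takes every positive value by the
intermediate value theorem, so its inverse is `C²` by the inverse function theorem
(`contDiffOn_leftInverse`).
-/

open MeasureTheory Set Filter

noncomputable section

/-- The mass function
`𝓘_N(R) = R^{-(2/(p-1)-N+2)} · N ω_N ∫₀^{min(1, R_N/R)} t^{N-1} u(t)^p dt`. -/
def scrIN (N : ℕ) (p ωN RN : ℝ) (u : ℝ → ℝ) (R : ℝ) : ℝ :=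
  R ^ (-(2 / (p - 1) - (N : ℝ) + 2)) *
    ((N : ℝ) * ωN * ∫ t in (0 : ℝ)..(min 1 (RN / R)), t ^ ((N : ℝ) - 1) * u t ^ p)

/-- If `h` has derivative `k` on `[0,1]` and `k 1 = 0`, then freezing `h` at its value in `1`
gives a function differentiable across `1`; the derivative is frozen in the same way. -/
lemma hasDerivAt_comp_min {h k : ℝ → ℝ}
    (hh : ∀ x ∈ Icc (0 : ℝ) 1, HasDerivWithinAt h (k x) (Icc 0 1) x) (hk : k 1 = 0)
    {x : ℝ} (hx : 0 < x) :
    HasDerivAt (fun y => h (min 1 y)) (k (min 1 x)) x := by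
  rcases lt_trichotomy x 1 with h1 | h1 | h1
  · have := (hh x ⟨hx.le, h1.le⟩).hasDerivAt (Icc_mem_nhds hx h1)
    rw [min_eq_right h1.le]
    refine this.congr_of_eventuallyEq ?_
    filter_upwards [Iio_mem_nhds h1] with y hy
    rw [min_eq_right (le_of_lt hy)]
  · subst h1
    rw [min_self]
    have hl : HasDerivWithinAt (fun y => h (min 1 y)) (k 1) (Icc 0 1) 1 :=
      (hh 1 ⟨zero_le_one, le_rfl⟩).congr (fun y hy => by rw [min_eq_right hy.2]) (by simp)
    have hr : HasDerivWithinAt (fun y => h (min 1 y)) (k 1) (Ici 1) 1 := by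
      rw [hk]
      exact (hasDerivWithinAt_const (1 : ℝ) (Ici 1) (h 1)).congr
        (fun y hy => by rw [min_eq_left hy]) (by simp)
    refine (hl.union hr).hasDerivAt ?_
    filter_upwards [Ioi_mem_nhds zero_lt_one] with y hy
    rcases le_total y 1 with h | h
    · exact Or.inl ⟨le_of_lt hy, h⟩
    · exact Or.inr h
  · rw [min_eq_left h1.le, hk]
    refine (hasDerivAt_const x (h 1)).congr_of_eventuallyEq ?_
    filter_upwards [Ioi_mem_nhds h1] with y hy
    rw [min_eq_left (le_of_lt hy)]

/-- Two applications of `hasDerivAt_comp_min`: if `h' = k`, `k' = l` on `[0,1]`, `l` is continuous,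
and both `k` and `l` vanish at `1`, then `h` frozen beyond `1` is `C²` on `(0, ∞)`. -/
lemma contDiffOn_comp_min {h k l : ℝ → ℝ}
    (hh : ∀ x ∈ Icc (0 : ℝ) 1, HasDerivWithinAt h (k x) (Icc 0 1) x) (hk : k 1 = 0)
    (hkl : ∀ x ∈ Icc (0 : ℝ) 1, HasDerivWithinAt k (l x) (Icc 0 1) x) (hl : l 1 = 0)
    (hlc : ContinuousOn l (Icc 0 1)) :
    ContDiffOn ℝ 2 (fun y => h (min 1 y)) (Ioi 0) := by
  have d1 : ∀ x ∈ Ioi (0 : ℝ), HasDerivAt (fun y => h (min 1 y)) (k (min 1 x)) x :=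
    fun x hx => hasDerivAt_comp_min hh hk hx
  have d2 : ∀ x ∈ Ioi (0 : ℝ), HasDerivAt (fun y => k (min 1 y)) (l (min 1 x)) x :=
    fun x hx => hasDerivAt_comp_min hkl hl hx
  have c2 : ContinuousOn (fun y => l (min 1 y)) (Ioi 0) :=
    hlc.comp (by fun_prop) (fun y hy => ⟨le_min zero_le_one (le_of_lt hy), min_le_left _ _⟩)
  have k1 : ContDiffOn ℝ 1 (fun y => k (min 1 y)) (Ioi 0) := by
    rw [show (1 : WithTop ℕ∞) = 0 + 1 from rfl, contDiffOn_succ_iff_deriv_of_isOpen isOpen_Ioi]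
    refine ⟨fun x hx => (d2 x hx).differentiableAt.differentiableWithinAt, by simp, ?_⟩
    rw [contDiffOn_zero]
    exact c2.congr fun x hx => (d2 x hx).deriv
  rw [show (2 : WithTop ℕ∞) = 1 + 1 from rfl, contDiffOn_succ_iff_deriv_of_isOpen isOpen_Ioi]
  refine ⟨fun x hx => (d1 x hx).differentiableAt.differentiableWithinAt, by simp, ?_⟩
  exact k1.congr fun x hx => (d1 x hx).deriv

/-- A `C²` function on `(0, ∞)` with negative derivative which takes every positive value has
`C²` left inverses on `(0, ∞)`, by the inverse function theorem. -/
lemma contDiffOn_leftInverse_s11 {I J : ℝ → ℝ} (hI : ContDiffOn ℝ 2 I (Ioi 0))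
    (hd : ∀ R ∈ Ioi (0 : ℝ), deriv I R < 0) (hsurj : ∀ y ∈ Ioi (0 : ℝ), ∃ R ∈ Ioi (0 : ℝ), I R = y)
    (hJ : ∀ R ∈ Ioi (0 : ℝ), J (I R) = R) : ContDiffOn ℝ 2 J (Ioi 0) := by
  intro y hy
  obtain ⟨R, hR, rfl⟩ := hsurj y hy
  have hc : ContDiffAt ℝ 2 I R := hI.contDiffAt (Ioi_mem_nhds hR)
  have hder : HasDerivAt I (deriv I R) R := (hc.differentiableAt (by norm_num)).hasDerivAt
  let e : ℝ ≃L[ℝ] ℝ := ContinuousLinearEquiv.unitsEquivAut ℝ (Units.mk0 _ (hd R hR).ne)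
  have he : HasFDerivAt I (e : ℝ →L[ℝ] ℝ) R := by
    have hee : (e : ℝ →L[ℝ] ℝ) = ContinuousLinearMap.toSpanSingleton ℝ (deriv I R) := by
      ext
      simp [e]
    rw [hee]
    exact hder.hasFDerivAt
  have h2 : (2 : WithTop ℕ∞) ≠ 0 := by norm_num
  have hloc := hc.to_localInverse he h2
  refine (hloc.congr_of_eventuallyEq ?_).contDiffWithinAt
  have hst : HasStrictFDerivAt I (e : ℝ →L[ℝ] ℝ) R := hc.hasStrictFDerivAt' he h2
  have hpos : ∀ᶠ z in nhds (I R), 0 < hst.localInverse I e R z := by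
    have := hst.localInverse_continuousAt
    refine this.eventually (Ioi_mem_nhds ?_)
    rw [hst.localInverse_apply_image]
    exact hR
  filter_upwards [hpos, hst.eventually_right_inverse] with z hz1 hz2
  have := hJ _ hz1
  rw [hz2] at this
  exact this

/-- for `N ≥ 3` the function `𝓘_N` is twice continuously differentiable
and strictly decreasing on `(0, +∞)`, with `𝓘_N(R) → +∞` as `R → 0⁺` and
`𝓘_N(R) → 0` as `R → +∞` (the exponent `2/(p-1) - N + 2` being positive since
`p < p_N`); consequently its inverse function is also twice continuously
differentiable on `(0, +∞)`. -/
theorem scrIN_contDiff_strictAnti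
    {N : ℕ} (hN : 3 ≤ N) (p : ℝ) (hp1 : 1 < p) (hpN : p < (N : ℝ) / ((N : ℝ) - 2))
    (ωN RN : ℝ)
    (hω : ωN = (volume (Metric.ball (0 : EuclideanSpace ℝ (Fin N)) 1)).toReal)
    (hRN0 : 0 < RN) (hRN : ωN * RN ^ N = 1)
    (u : ℝ → ℝ)
    (hreg : ContDiffOn ℝ 2 u (Icc 0 1))
    (hpos : ∀ r ∈ Ico (0 : ℝ) 1, 0 < u r)
    (hu1 : u 1 = 0)
    (hu' : ∀ r ∈ Ioc (0 : ℝ) 1, deriv u r < 0)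
    (hu'0 : deriv u 0 = 0)
    (hode : ∀ r ∈ Ioo (0 : ℝ) 1,
      deriv (deriv u) r + (((N : ℝ) - 1) / r) * deriv u r = -(u r ^ p)) :
    0 < 2 / (p - 1) - (N : ℝ) + 2 ∧
    ContDiffOn ℝ 2 (scrIN N p ωN RN u) (Ioi 0) ∧
    StrictAntiOn (scrIN N p ωN RN u) (Ioi 0) ∧
    Tendsto (scrIN N p ωN RN u) (nhdsWithin 0 (Ioi 0)) atTop ∧
    Tendsto (scrIN N p ωN RN u) atTop (nhds 0) ∧
    ∀ J : ℝ → ℝ, (∀ R ∈ Ioi (0 : ℝ), J (scrIN N p ωN RN u R) = R) →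
      ContDiffOn ℝ 2 J (Ioi 0) := by
  have hN' : (3 : ℝ) ≤ N := by exact_mod_cast hN
  have hα : 0 < 2 / (p - 1) - (N : ℝ) + 2 := by
    rw [lt_div_iff₀ (by linarith)] at hpN
    have : (N : ℝ) - 2 < 2 / (p - 1) := by
      rw [lt_div_iff₀ (by linarith)]
      nlinarith
    linarith
  refine ⟨hα, ?_⟩
  have hωpos : 0 < ωN := by
    by_contra h
    have := mul_nonpos_of_nonpos_of_nonneg (not_lt.1 h) (pow_pos hRN0 N).le
    linarith
  set α : ℝ := 2 / (p - 1) - (N : ℝ) + 2 with hαdef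
  set c : ℝ := (N : ℝ) * ωN with hcdef
  have hc : 0 < c := by positivity
  -- `f` is the integrand, `G` its primitive, and `l` the derivative of `f`.
  set f : ℝ → ℝ := fun t => t ^ ((N : ℝ) - 1) * u t ^ p with hf
  set G : ℝ → ℝ := fun s => ∫ t in (0 : ℝ)..s, f t with hG
  set l : ℝ → ℝ := fun t =>
    (1 * ((N : ℝ) - 1) * t ^ ((N : ℝ) - 1 - 1)) * u t ^ p +
      t ^ ((N : ℝ) - 1) * (derivWithin u (Icc 0 1) t * p * u t ^ (p - 1)) with hl
  have hu_cont : ContinuousOn u (Icc 0 1) := hreg.continuousOn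
  have hd_cont : ContinuousOn (derivWithin u (Icc 0 1)) (Icc 0 1) :=
    hreg.continuousOn_derivWithin (uniqueDiffOn_Icc zero_lt_one) (by norm_num)
  have hrp : ∀ q : ℝ, 0 ≤ q → ContinuousOn (fun t => u t ^ q) (Icc 0 1) := fun q hq =>
    hu_cont.rpow_const fun _ _ => Or.inr hq
  have htp : ∀ q : ℝ, 0 ≤ q → ContinuousOn (fun t : ℝ => t ^ q) (Icc 0 1) := fun q hq =>
    continuousOn_id.rpow_const fun _ _ => Or.inr hq
  have hf_cont : ContinuousOn f (Icc 0 1) :=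
    (htp _ (by linarith)).mul (hrp _ (by linarith))
  have hl_cont : ContinuousOn l (Icc 0 1) :=
    ((continuousOn_const.mul (htp _ (by linarith))).mul (hrp _ (by linarith))).add
      ((htp _ (by linarith)).mul ((hd_cont.mul continuousOn_const).mul (hrp _ (by linarith))))
  have hfl : ∀ x ∈ Icc (0 : ℝ) 1, HasDerivWithinAt f (l x) (Icc 0 1) x := by
    intro x hx
    have h1 : HasDerivWithinAt u (derivWithin u (Icc 0 1) x) (Icc 0 1) x :=
      ((hreg.differentiableOn (by norm_num)) x hx).hasDerivWithinAt
    have h2 := h1.rpow_const (p := p) (Or.inr hp1.le)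
    have h3 := (hasDerivWithinAt_id x (Icc (0 : ℝ) 1)).rpow_const (p := (N : ℝ) - 1)
      (Or.inr (by linarith))
    exact h3.mul h2
  have hGf : ∀ x ∈ Icc (0 : ℝ) 1, HasDerivWithinAt G (f x) (Icc 0 1) x := by
    intro x hx
    have : Fact (x ∈ Icc (0 : ℝ) 1) := ⟨hx⟩
    refine intervalIntegral.integral_hasDerivWithinAt_right ?_ ?_ (hf_cont x hx)
    · refine (hf_cont.mono ?_).intervalIntegrable
      rw [uIcc_of_le hx.1]
      exact Icc_subset_Icc_right hx.2
    · exact hf_cont.stronglyMeasurableAtFilter_nhdsWithin measurableSet_Icc x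
  have hf1 : f 1 = 0 := by simp [hf, hu1, Real.zero_rpow (by linarith : p ≠ 0)]
  have hl1 : l 1 = 0 := by
    simp [hl, hu1, Real.zero_rpow (by linarith : p ≠ 0),
      Real.zero_rpow (by linarith : p - 1 ≠ 0)]
  have hF2 : ContDiffOn ℝ 2 (fun y => G (min 1 y)) (Ioi 0) :=
    contDiffOn_comp_min hGf hf1 hfl hl1 hl_cont
  have hFd : ∀ x, 0 < x → HasDerivAt (fun y => G (min 1 y)) (f (min 1 x)) x :=
    fun x hx => hasDerivAt_comp_min hGf hf1 hx
  have hf0 : ∀ x ∈ Icc (0 : ℝ) 1, 0 ≤ f x := by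
    intro x hx
    have : 0 ≤ u x := by
      rcases hx.2.eq_or_lt with h | h
      · rw [h, hu1]
      · exact (hpos x ⟨hx.1, h⟩).le
    exact mul_nonneg (Real.rpow_nonneg hx.1 _) (Real.rpow_nonneg this _)
  have hGpos : ∀ s ∈ Ioc (0 : ℝ) 1, 0 < G s := by
    intro s hs
    refine intervalIntegral.intervalIntegral_pos_of_pos_on ?_ ?_ hs.1
    · refine (hf_cont.mono ?_).intervalIntegrable
      rw [uIcc_of_le hs.1.le]
      exact Icc_subset_Icc_right hs.2
    · intro x hx
      exact mul_pos (Real.rpow_pos_of_pos hx.1 _)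
        (Real.rpow_pos_of_pos (hpos x ⟨hx.1.le, hx.2.trans_le hs.2⟩) _)
  have hGmono : MonotoneOn G (Icc 0 1) := by
    refine monotoneOn_of_deriv_nonneg (convex_Icc 0 1)
      (fun x hx => (hGf x hx).continuousWithinAt) ?_ ?_
    · intro x hx
      exact ((hGf x (interior_subset hx)).mono interior_subset).differentiableWithinAt
    · intro x hx
      have hx' := interior_subset hx
      rw [interior_Icc] at hx
      rw [((hGf x hx').hasDerivAt (Icc_mem_nhds hx.1 hx.2)).deriv]
      exact hf0 x hx'
  have hmin : ∀ x : ℝ, 0 < x → min 1 x ∈ Ioc (0 : ℝ) 1 := fun x hx =>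
    ⟨lt_min zero_lt_one hx, min_le_left _ _⟩
  have hI : scrIN N p ωN RN u = fun R => R ^ (-α) * (c * G (min 1 (RN / R))) := rfl
  rw [hI]
  set I : ℝ → ℝ := fun R => R ^ (-α) * (c * G (min 1 (RN / R))) with hIdef
  have hId : ∀ R, 0 < R → ∃ I', HasDerivAt I I' R ∧ I' < 0 := by
    intro R hR
    have h1 := Real.hasDerivAt_rpow_const (x := R) (p := -α) (Or.inl hR.ne')
    have hq : HasDerivAt (fun R : ℝ => RN / R) (-(RN / R ^ 2)) R :=
      ((hasDerivAt_const R RN).div (hasDerivAt_id R) hR.ne').congr_deriv (by simp; ring)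
    have h2 := ((hFd (RN / R) (by positivity)).comp R hq).const_mul c
    refine ⟨_, h1.mul h2, ?_⟩
    have hm := hmin (RN / R) (by positivity)
    have a1 : 0 < α * R ^ (-α - 1) * (c * G (min 1 (RN / R))) := by
      have := hGpos _ hm
      positivity
    have a2 : 0 ≤ R ^ (-α) * (c * (f (min 1 (RN / R)) * (RN / R ^ 2))) := by
      have := hf0 _ (Ioc_subset_Icc_self hm)
      positivity
    linarith
  have hIderiv : ∀ R ∈ Ioi (0 : ℝ), deriv I R < 0 := by
    intro R hR
    obtain ⟨I', h1, h2⟩ := hId R hR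
    rwa [h1.deriv]
  have hIcont : ContinuousOn I (Ioi 0) := fun R hR => by
    obtain ⟨I', h1, -⟩ := hId R hR
    exact h1.continuousAt.continuousWithinAt
  have hI2 : ContDiffOn ℝ 2 I (Ioi 0) := by
    refine ContDiffOn.mul ?_ (contDiffOn_const.mul ?_)
    · intro R hR
      exact (Real.contDiffAt_rpow_const_of_ne (ne_of_gt hR)).contDiffWithinAt
    · refine hF2.comp (s := Ioi 0) (f := fun R : ℝ => RN / R) ?_ fun R hR => ?_
      · exact contDiffOn_const.div contDiffOn_id fun R hR => ne_of_gt hR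
      · exact div_pos hRN0 hR
  have hIanti : StrictAntiOn I (Ioi 0) := by
    refine strictAntiOn_of_deriv_neg (convex_Ioi 0) hIcont ?_
    rw [interior_Ioi]
    exact hIderiv
  have hI0 : Tendsto I (nhdsWithin 0 (Ioi 0)) atTop := by
    have h1 : Tendsto (fun R : ℝ => R ^ (-α) * (c * G 1)) (nhdsWithin 0 (Ioi 0)) atTop :=
      (tendsto_rpow_neg_nhdsGT_zero (by linarith)).atTop_mul_const
        (mul_pos hc (hGpos 1 ⟨zero_lt_one, le_rfl⟩))
    refine h1.congr' ?_
    filter_upwards [Ioo_mem_nhdsGT hRN0] with R hR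
    have : 1 ≤ RN / R := by
      rw [le_div_iff₀ hR.1]
      linarith [hR.2]
    simp only [hIdef, min_eq_left this]
  have hIinf : Tendsto I atTop (nhds 0) := by
    have h1 : Tendsto (fun R : ℝ => R ^ (-α) * (c * G 1)) atTop (nhds 0) := by
      simpa using (tendsto_rpow_neg_atTop hα).mul_const (c * G 1)
    refine tendsto_of_tendsto_of_tendsto_of_le_of_le' tendsto_const_nhds h1 ?_ ?_
    · filter_upwards [eventually_gt_atTop 0] with R hR
      have := hGpos _ (hmin (RN / R) (by positivity))
      positivity
    · filter_upwards [eventually_gt_atTop 0] with R hR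
      have hm := hmin (RN / R) (by positivity)
      have := hGmono (Ioc_subset_Icc_self hm) ⟨zero_le_one, le_rfl⟩ hm.2
      simp only [hIdef]
      gcongr
  refine ⟨hI2, hIanti, hI0, hIinf, fun J hJ => contDiffOn_leftInverse_s11 hI2 hIderiv ?_ hJ⟩
  intro y hy
  obtain ⟨a, ha, hya⟩ := ((hI0.eventually_ge_atTop y).and self_mem_nhdsWithin).exists
  obtain ⟨b, hb, hyb⟩ := ((hIinf.eventually_le_const hy).and (eventually_gt_atTop 0)).exists
  exact isPreconnected_Ioi.intermediate_value (show b ∈ Ioi (0 : ℝ) from hyb) hya hIcont ⟨hb, ha⟩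

end
end

section
/- Regularity of α_λ: for λ > 0 let R(λ) be the unique R > 0 with 𝓘_N(R) = λ^{p/(p−1)}, and define α(λ) := λ^{−1/(p−1)} γ(R(λ)), where γ(R) := R^{−2/(p−1)} u(R_N/R) for R ≥ R_N, and for 0 < R < R_N: γ(R) := u'(1) R^{−2/(p−1)} log(R_N/R) if N = 2, and γ(R) := (u'(1)/(N−2)) R^{−2/(p−1)} (1 − (R/R_N)^{N−2}) if N ≥ 3. Then α is twice continuously differentiable on (0, +∞). -/
/-!
Write `F(x) = ∫₀ˣ t^{N-1} u(t)^p dt`, with `u` continued by `0` beyond `1` (`flux`), and let `w` be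
the profile `u` on `(0, 1]` continued beyond `1` by the radial harmonic function with slope `u'(1)`
(`prof`). Then `𝓘_N(R) = N ω_N R^{-a} F(R_N/R)` with `a = 2/(p-1) - N + 2` and
`γ(R) = R^{-2/(p-1)} w(R_N/R)` for all `R > 0`, so the case distinction at `R = R_N` disappears
(`flux_eq_integral_min`, `gamR_eq`).

The radial equation integrates to `w'(t) = -t^{-(N-1)} F(t)` on `(0, ∞)`, including across `t = 1`
(`prof_hasDerivAt`), while `F'(t) = t^{N-1} (max (w t) 0)^p`. Since `p > 1`, `x ↦ (max x 0)^p` is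
`C¹`, and bootstrapping gives `F, w ∈ C²(0, ∞)` (`flux_prof_contDiffOn`). Subcriticality means
`a > 0`, so `𝓘_N` has negative derivative (`deriv_mass_neg`); hence `R(λ)` is `C²` by the inverse
function theorem (`contDiffOn_of_comp_eq`), and so is `α`.
-/

open MeasureTheory Set Filter

noncomputable section

/-- The boundary value `γ(R)`: equal to `R^{-2/(p-1)} u(R_N/R)` for `R ≥ R_N`, and for
`0 < R < R_N` given by the harmonic tail (logarithmic for `N = 2`, power-like for
`N ≥ 3`), with `c = u'(1)`. -/
def gamR (N : ℕ) (p RN c : ℝ) (u : ℝ → ℝ) (R : ℝ) : ℝ :=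
  if RN ≤ R then R ^ (-(2 / (p - 1))) * u (RN / R)
  else if N = 2 then c * R ^ (-(2 / (p - 1))) * Real.log (RN / R)
  else (c / ((N : ℝ) - 2)) * R ^ (-(2 / (p - 1))) * (1 - (R / RN) ^ ((N : ℝ) - 2))

open Topology

/-! ### Calculus preliminaries -/

/-- Glueing of one-sided derivatives. -/
lemma hasDerivAt_of_Iic_Ici {f : ℝ → ℝ} {d x : ℝ} (h1 : HasDerivWithinAt f d (Iic x) x)
    (h2 : HasDerivWithinAt f d (Ici x) x) : HasDerivAt f d x := by
  have := h1.union h2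
  rwa [Iic_union_Ici, hasDerivWithinAt_univ] at this

lemma contDiffOn_succ_of_hasDerivAt {f g : ℝ → ℝ} {n : ℕ}
    (h : ∀ x ∈ Ioi (0 : ℝ), HasDerivAt f (g x) x) (hg : ContDiffOn ℝ n g (Ioi 0)) :
    ContDiffOn ℝ ((n : WithTop ℕ∞) + 1) f (Ioi 0) := by
  rw [contDiffOn_succ_iff_deriv_of_isOpen isOpen_Ioi]
  refine ⟨fun x hx => (h x hx).differentiableAt.differentiableWithinAt, ?_, ?_⟩
  · intro hn
    exact absurd hn (by simp)
  · exact hg.congr fun x hx => (h x hx).deriv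

/-- The truncated power `x ↦ (max x 0) ^ p` is of class `C¹` because `p > 1`; this is the only
source of limited regularity in the whole argument. -/
lemma contDiff_posPart_rpow {p : ℝ} (hp : 1 < p) : ContDiff ℝ 1 (fun x : ℝ => max x 0 ^ p) := by
  have key : ∀ x : ℝ, HasDerivAt (fun x : ℝ => max x 0 ^ p) (p * max x 0 ^ (p - 1)) x := by
    intro x
    rcases lt_trichotomy x 0 with hx | rfl | hx
    · have h0 : (fun x : ℝ => max x 0 ^ p) =ᶠ[𝓝 x] fun _ => 0 := by
        filter_upwards [Iio_mem_nhds hx] with y hy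
        rw [max_eq_right (le_of_lt hy), Real.zero_rpow (by linarith)]
      rw [max_eq_right hx.le, Real.zero_rpow (by linarith), mul_zero]
      exact (hasDerivAt_const x (0 : ℝ)).congr_of_eventuallyEq h0
    · rw [max_self, Real.zero_rpow (by linarith), mul_zero]
      apply hasDerivAt_of_Iic_Ici
      · refine (hasDerivWithinAt_const (0 : ℝ) _ (0 : ℝ)).congr ?_ ?_
        · intro y hy
          rw [max_eq_right (mem_Iic.1 hy), Real.zero_rpow (by linarith)]
        · rw [max_self, Real.zero_rpow (by linarith)]
      · have h := (Real.hasDerivAt_rpow_const (x := 0) (p := p) (Or.inr hp.le)).hasDerivWithinAt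
          (s := Ici 0)
        rw [Real.zero_rpow (by linarith : p - 1 ≠ 0), mul_zero] at h
        refine h.congr ?_ ?_
        · intro y hy
          rw [max_eq_left (mem_Ici.1 hy)]
        · rw [max_self]
    · have h0 : (fun x : ℝ => max x 0 ^ p) =ᶠ[𝓝 x] fun x => x ^ p := by
        filter_upwards [Ioi_mem_nhds hx] with y hy
        rw [max_eq_left (le_of_lt hy)]
      rw [max_eq_left hx.le]
      exact (Real.hasDerivAt_rpow_const (Or.inl hx.ne')).congr_of_eventuallyEq h0
  rw [contDiff_one_iff_deriv]
  refine ⟨fun x => (key x).differentiableAt, ?_⟩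
  rw [show deriv (fun x : ℝ => max x 0 ^ p) = fun x => p * max x 0 ^ (p - 1) from
    funext fun x => (key x).deriv]
  have : Continuous fun x : ℝ => max x 0 ^ (p - 1) :=
    (continuous_id.max continuous_const).rpow_const fun x => Or.inr (by linarith)
  exact continuous_const.mul this

/-! ### Level functions of a decreasing function -/

/-- If `J` is `C²` on `(0, ∞)` with negative derivative, then a function `S` with `J ∘ S = h`,
`h` of class `C²`, is `C²`: near each point `S` is the composition of `h` with the local inverse of
`J`, by injectivity of `J`. -/
lemma contDiffOn_of_comp_eq {J S h : ℝ → ℝ} (hJ : ContDiffOn ℝ 2 J (Ioi 0))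
    (hJ' : ∀ R ∈ Ioi (0 : ℝ), deriv J R < 0) (hh : ContDiffOn ℝ 2 h (Ioi 0))
    (hS : ∀ x ∈ Ioi (0 : ℝ), 0 < S x ∧ J (S x) = h x) : ContDiffOn ℝ 2 S (Ioi 0) := by
  have hinj : InjOn J (Ioi 0) := by
    apply StrictAntiOn.injOn
    apply strictAntiOn_of_deriv_neg (convex_Ioi 0) hJ.continuousOn
    rwa [interior_Ioi]
  intro x hx
  obtain ⟨hSx, hJS⟩ := hS x hx
  have hJa : ContDiffAt ℝ 2 J (S x) := hJ.contDiffAt (Ioi_mem_nhds hSx)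
  have hne : deriv J (S x) ≠ 0 := (hJ' _ hSx).ne
  have hd : HasDerivAt J (deriv J (S x)) (S x) :=
    (hJa.differentiableAt (by norm_num)).hasDerivAt
  have hf' : HasFDerivAt J
      ((ContinuousLinearEquiv.unitsEquivAut ℝ (Units.mk0 _ hne) : ℝ ≃L[ℝ] ℝ) : ℝ →L[ℝ] ℝ) (S x) :=
    hd.hasFDerivAt_equiv hne
  have h2 : (2 : WithTop ℕ∞) ≠ 0 := by norm_num
  set ψ := hJa.localInverse hf' h2 with hψ
  have hψa : ψ (J (S x)) = S x := hJa.localInverse_apply_image hf' h2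
  have hψc : ContDiffAt ℝ 2 ψ (J (S x)) := hJa.to_localInverse hf' h2
  have hψr : ∀ᶠ y in 𝓝 (J (S x)), J (ψ y) = y :=
    (hJa.hasStrictFDerivAt' hf' h2).eventually_right_inverse
  have hψp : ∀ᶠ y in 𝓝 (J (S x)), 0 < ψ y :=
    hψc.continuousAt.eventually (by rw [hψa]; exact Ioi_mem_nhds hSx)
  rw [hJS] at hψc hψr hψp
  have hha : ContDiffAt ℝ 2 h x := hh.contDiffAt (Ioi_mem_nhds hx)
  refine ((hψc.comp x hha).congr_of_eventuallyEq ?_).contDiffWithinAt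
  filter_upwards [hha.continuousAt.eventually hψr, hha.continuousAt.eventually hψp,
    Ioi_mem_nhds hx] with y h1 h2 h3
  exact hinj (hS y h3).1 h2 ((hS y h3).2.trans h1.symm)

/-! ### The flux and the extended profile -/

/-- The constant extension of `u|[0,1]` to the real line. -/
def uExt (u : ℝ → ℝ) (t : ℝ) : ℝ := u (max 0 (min t 1))

/-- The flux `∫₀ˣ t^s u(t)^p dt`, with `u` extended by `u 1` beyond `1`. -/
def flux (s p : ℝ) (u : ℝ → ℝ) (x : ℝ) : ℝ := ∫ t in (0 : ℝ)..x, t ^ s * uExt u t ^ p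

/-- The radial harmonic function on `(0, ∞)` vanishing at `1` with derivative `t^{-(N-1)}`. -/
def radHarm (N : ℕ) (t : ℝ) : ℝ :=
  if N = 2 then Real.log t else (1 - t ^ (-((N : ℝ) - 2))) / ((N : ℝ) - 2)

/-- The profile `u` on `(0, 1]` continued harmonically beyond `1`, with slope `c` at `1`. -/
def prof (N : ℕ) (c : ℝ) (u : ℝ → ℝ) (t : ℝ) : ℝ := if t ≤ 1 then u t else c * radHarm N t

lemma radHarm_one (N : ℕ) : radHarm N 1 = 0 := by
  unfold radHarm; split_ifs <;> simp

lemma radHarm_hasDerivAt {N : ℕ} (hN : 2 ≤ N) {t : ℝ} (ht : 0 < t) :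
    HasDerivAt (radHarm N) (t ^ (-((N : ℝ) - 1))) t := by
  unfold radHarm
  split_ifs with h
  · subst h
    have := Real.hasDerivAt_log ht.ne'
    convert! this using 1
    norm_num [Real.rpow_neg_one]
  · have h3 : (3 : ℝ) ≤ N := by exact_mod_cast (show 3 ≤ N by omega)
    have hne : (N : ℝ) - 2 ≠ 0 := by linarith
    have := ((Real.hasDerivAt_rpow_const (x := t) (p := -((N : ℝ) - 2))
      (Or.inl ht.ne')).const_sub 1).div_const ((N : ℝ) - 2)
    convert! this using 1
    rw [show -((N : ℝ) - 2) - 1 = -((N : ℝ) - 1) by ring]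
    field_simp

lemma radHarm_pos {N : ℕ} (hN : 2 ≤ N) {t : ℝ} (ht : 1 < t) : 0 < radHarm N t := by
  unfold radHarm
  split_ifs with h
  · exact Real.log_pos ht
  · have h3 : (3 : ℝ) ≤ N := by exact_mod_cast (show 3 ≤ N by omega)
    apply div_pos _ (by linarith)
    have := Real.rpow_lt_one_of_one_lt_of_neg ht (show -((N : ℝ) - 2) < 0 by linarith)
    linarith

lemma uExt_of_mem {u : ℝ → ℝ} {t : ℝ} (h0 : 0 ≤ t) (h1 : t ≤ 1) : uExt u t = u t := by
  unfold uExt; rw [min_eq_left h1, max_eq_right h0]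

lemma uExt_of_one_le {u : ℝ → ℝ} (hu1 : u 1 = 0) {t : ℝ} (h1 : 1 ≤ t) : uExt u t = 0 := by
  unfold uExt; rw [min_eq_right h1, max_eq_right zero_le_one, hu1]

lemma fluxIntegrand_continuous {s p : ℝ} (hs : 0 < s) (hp : 0 < p) {u : ℝ → ℝ}
    (hu : ContinuousOn u (Icc 0 1)) : Continuous fun t => t ^ s * uExt u t ^ p := by
  have h1 : Continuous (uExt u) := by
    refine hu.comp_continuous (continuous_const.max (continuous_id.min continuous_const)) ?_
    intro t
    exact ⟨le_max_left _ _, max_le zero_le_one (min_le_right _ _)⟩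
  exact (continuous_id.rpow_const fun _ => Or.inr hs.le).mul
    (h1.rpow_const fun _ => Or.inr hp.le)

lemma flux_hasDerivAt {s p : ℝ} (hs : 0 < s) (hp : 0 < p) {u : ℝ → ℝ}
    (hu : ContinuousOn u (Icc 0 1)) (x : ℝ) :
    HasDerivAt (flux s p u) (x ^ s * uExt u x ^ p) x :=
  (fluxIntegrand_continuous hs hp hu).integral_hasStrictDerivAt 0 x |>.hasDerivAt

lemma flux_eq_integral_min {s p : ℝ} (hs : 0 < s) (hp : 0 < p) {u : ℝ → ℝ}
    (hu : ContinuousOn u (Icc 0 1)) (hu1 : u 1 = 0) {x : ℝ} (hx : 0 < x) :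
    ∫ t in (0 : ℝ)..(min 1 x), t ^ s * u t ^ p = flux s p u x := by
  have hc := fluxIntegrand_continuous hs hp hu
  have h1 : ∫ t in (0 : ℝ)..(min 1 x), t ^ s * u t ^ p = flux s p u (min 1 x) := by
    apply intervalIntegral.integral_congr
    intro t ht
    rw [uIcc_of_le (by positivity)] at ht
    simp only [uExt_of_mem ht.1 (ht.2.trans (min_le_left _ _))]
  rw [h1]
  rcases le_total x 1 with h | h
  · rw [min_eq_right h]
  · rw [min_eq_left h]
    unfold flux
    rw [← intervalIntegral.integral_add_adjacent_intervals (b := 1) (c := x)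
      (hc.intervalIntegrable _ _) (hc.intervalIntegrable _ _)]
    have : ∫ t in (1 : ℝ)..x, t ^ s * uExt u t ^ p = ∫ t in (1 : ℝ)..x, (0 : ℝ) := by
      apply intervalIntegral.integral_congr
      intro t ht
      rw [uIcc_of_le h] at ht
      simp only [uExt_of_one_le hu1 ht.1, Real.zero_rpow hp.ne', mul_zero]
    rw [this]; simp

lemma uExt_nonneg {u : ℝ → ℝ} (hpos : ∀ r ∈ Ico (0 : ℝ) 1, 0 < u r) (hu1 : u 1 = 0) (t : ℝ) :
    0 ≤ uExt u t := by
  unfold uExt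
  rcases (max_le zero_le_one (min_le_right t 1) : max 0 (min t 1) ≤ 1).lt_or_eq with h | h
  · exact (hpos _ ⟨le_max_left _ _, h⟩).le
  · rw [h, hu1]

lemma flux_pos {s p : ℝ} (hs : 0 < s) (hp : 0 < p) {u : ℝ → ℝ}
    (hu : ContinuousOn u (Icc 0 1)) (hpos : ∀ r ∈ Ico (0 : ℝ) 1, 0 < u r) (hu1 : u 1 = 0)
    {x : ℝ} (hx : 0 < x) : 0 < flux s p u x := by
  have hc := fluxIntegrand_continuous hs hp hu
  refine intervalIntegral.integral_pos hx hc.continuousOn ?_ ?_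
  · intro t ht
    exact mul_nonneg (Real.rpow_nonneg ht.1.le _) (Real.rpow_nonneg (uExt_nonneg hpos hu1 t) _)
  · have hm : 0 < min x (1 / 2) := by positivity
    have hm1 : min x (1 / 2) < 1 := (min_le_right _ _).trans_lt (by norm_num)
    refine ⟨min x (1 / 2), ⟨hm.le, min_le_left _ _⟩, ?_⟩
    rw [uExt_of_mem hm.le hm1.le]
    exact mul_pos (Real.rpow_pos_of_pos hm _) (Real.rpow_pos_of_pos (hpos _ ⟨hm.le, hm1⟩) _)

/-- The first integral of the radial equation: `t^s u'(t) = -∫₀ᵗ τ^s u^p dτ`. -/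
lemma rpow_mul_derivWithin_eq {s p : ℝ} (hs : 0 < s) (hp : 0 < p) {u : ℝ → ℝ}
    (hreg : ContDiffOn ℝ 2 u (Icc 0 1))
    (hode : ∀ r ∈ Ioo (0 : ℝ) 1, deriv (deriv u) r + (s / r) * deriv u r = -(u r ^ p))
    {t : ℝ} (ht : t ∈ Ioc (0 : ℝ) 1) :
    t ^ s * derivWithin u (Icc 0 1) t = -flux s p u t := by
  have hcu := hreg.continuousOn
  have hD : ContinuousOn (derivWithin u (Icc 0 1)) (Icc 0 1) :=
    hreg.continuousOn_derivWithin (uniqueDiffOn_Icc zero_lt_one) (by norm_num)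
  set Φ : ℝ → ℝ := fun t => t ^ s * derivWithin u (Icc 0 1) t + flux s p u t with hΦ
  have hΦc : ContinuousOn Φ (Icc 0 t) := by
    refine ContinuousOn.mono (ContinuousOn.add (ContinuousOn.mul ?_ hD) ?_)
      (Icc_subset_Icc_right ht.2)
    · exact continuousOn_id.rpow_const fun _ _ => Or.inr hs.le
    · exact fun x _ => (flux_hasDerivAt hs hp hcu x).continuousAt.continuousWithinAt
  have hΦ' : ∀ x ∈ Ioo 0 t, HasDerivAt Φ 0 x := by
    intro x hx
    have hx1 : x ∈ Ioo (0 : ℝ) 1 := ⟨hx.1, hx.2.trans_le ht.2⟩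
    have hua : ContDiffAt ℝ 2 u x := hreg.contDiffAt (Icc_mem_nhds hx1.1 hx1.2)
    have hdd : HasDerivAt (deriv u) (deriv (deriv u) x) x := by
      have : ContDiffAt ℝ 1 (deriv u) x := by
        have h := (hreg.mono Ioo_subset_Icc_self).deriv_of_isOpen isOpen_Ioo
          (m := 1) (by norm_num)
        exact h.contDiffAt (Ioo_mem_nhds hx1.1 hx1.2)
      exact (this.differentiableAt (by norm_num)).hasDerivAt
    have hev : derivWithin u (Icc 0 1) =ᶠ[𝓝 x] deriv u := by
      filter_upwards [Ioo_mem_nhds hx1.1 hx1.2] with y hy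
      exact derivWithin_of_mem_nhds (Icc_mem_nhds hy.1 hy.2)
    have h1 := ((Real.hasDerivAt_rpow_const (x := x) (p := s) (Or.inl hx.1.ne')).mul
      (hdd.congr_of_eventuallyEq hev)).add (flux_hasDerivAt hs hp hcu x)
    convert! h1 using 1
    have hO := hode x hx1
    rw [hev.eq_of_nhds, uExt_of_mem hx1.1.le hx1.2.le, Real.rpow_sub_one hx.1.ne']
    have : u x ^ p = -(deriv (deriv u) x + (s / x) * deriv u x) := by linarith
    rw [this]
    field_simp
    ring
  obtain ⟨c, hc, hc'⟩ := exists_hasDerivAt_eq_slope Φ (fun _ => 0) ht.1 hΦc hΦ'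
  have h0 : Φ 0 = 0 := by
    simp only [hΦ, flux, Real.zero_rpow hs.ne', zero_mul, intervalIntegral.integral_same, add_zero]
  rw [h0, sub_zero, sub_zero, eq_comm, div_eq_zero_iff] at hc'
  have : Φ t = 0 := hc'.resolve_right ht.1.ne'
  simp only [hΦ] at this
  linarith

/-- Across `t = 1` the extended profile satisfies `w' = -t^{-(N-1)} ∫₀ᵗ τ^{N-1} u^p`. -/
lemma prof_hasDerivAt {N : ℕ} (hN : 2 ≤ N) {p : ℝ} (hp : 0 < p) {u : ℝ → ℝ}
    (hreg : ContDiffOn ℝ 2 u (Icc 0 1)) (hu1 : u 1 = 0) (hd1 : DifferentiableAt ℝ u 1)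
    (hode : ∀ r ∈ Ioo (0 : ℝ) 1,
      deriv (deriv u) r + (((N : ℝ) - 1) / r) * deriv u r = -(u r ^ p))
    {t : ℝ} (ht : 0 < t) :
    HasDerivAt (prof N (deriv u 1) u)
      (-(t ^ (-((N : ℝ) - 1)) * flux ((N : ℝ) - 1) p u t)) t := by
  have hN' : (2 : ℝ) ≤ N := by exact_mod_cast hN
  have hs : (0 : ℝ) < (N : ℝ) - 1 := by linarith
  have hcu := hreg.continuousOn
  have hfl1 : deriv u 1 = -flux ((N : ℝ) - 1) p u 1 := by
    have h := rpow_mul_derivWithin_eq hs hp hreg hode (right_mem_Ioc.2 zero_lt_one)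
    rwa [Real.one_rpow, one_mul,
      hd1.derivWithin (uniqueDiffOn_Icc zero_lt_one 1 (right_mem_Icc.2 zero_le_one))] at h
  rcases lt_trichotomy t 1 with h | rfl | h
  · have hmem := Icc_mem_nhds ht h
    have hev : prof N (deriv u 1) u =ᶠ[𝓝 t] u := by
      filter_upwards [Iio_mem_nhds h] with y hy
      exact if_pos (le_of_lt hy)
    have hu : HasDerivAt u (deriv u t) t :=
      ((hreg.contDiffAt hmem).differentiableAt (by norm_num)).hasDerivAt
    have hfl := rpow_mul_derivWithin_eq hs hp hreg hode ⟨ht, h.le⟩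
    rw [derivWithin_of_mem_nhds hmem] at hfl
    convert! hu.congr_of_eventuallyEq hev using 1
    rw [← mul_neg, ← hfl, ← mul_assoc, ← Real.rpow_add ht, neg_add_cancel, Real.rpow_zero, one_mul]
  · rw [Real.one_rpow, one_mul, ← hfl1]
    apply hasDerivAt_of_Iic_Ici
    · exact hd1.hasDerivAt.hasDerivWithinAt.congr (fun y hy => if_pos hy) (if_pos le_rfl)
    · have h1 := ((radHarm_hasDerivAt hN zero_lt_one).const_mul (deriv u 1)).hasDerivWithinAt
        (s := Ici 1)
      rw [Real.one_rpow, mul_one] at h1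
      have h2 : prof N (deriv u 1) u 1 = deriv u 1 * radHarm N 1 := by
        rw [radHarm_one, mul_zero, prof, if_pos le_rfl, hu1]
      refine h1.congr ?_ h2
      intro y hy
      rcases (mem_Ici.1 hy).eq_or_lt with rfl | hy
      · exact h2
      · exact if_neg (not_le.2 hy)
  · have hev : prof N (deriv u 1) u =ᶠ[𝓝 t] fun t => deriv u 1 * radHarm N t := by
      filter_upwards [Ioi_mem_nhds h] with y hy
      exact if_neg (not_le.2 hy)
    have hflt : flux ((N : ℝ) - 1) p u t = flux ((N : ℝ) - 1) p u 1 := by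
      rw [← flux_eq_integral_min hs hp hcu hu1 ht,
        ← flux_eq_integral_min hs hp hcu hu1 zero_lt_one, min_eq_left h.le, min_self]
    convert! ((radHarm_hasDerivAt hN ht).const_mul (deriv u 1)).congr_of_eventuallyEq hev using 1
    rw [hflt, hfl1]
    ring

lemma uExt_eq_max_prof {N : ℕ} (hN : 2 ≤ N) {c : ℝ} (hc : c < 0) {u : ℝ → ℝ}
    (hpos : ∀ r ∈ Ico (0 : ℝ) 1, 0 < u r) (hu1 : u 1 = 0) {t : ℝ} (ht : 0 < t) :
    uExt u t = max (prof N c u t) 0 := by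
  rcases le_or_gt t 1 with h | h
  · rw [prof, if_pos h, max_eq_left, uExt_of_mem ht.le h]
    rw [← uExt_of_mem (u := u) ht.le h]
    exact uExt_nonneg hpos hu1 t
  · rw [prof, if_neg (not_le.2 h), uExt_of_one_le hu1 h.le, max_eq_right]
    exact (mul_neg_of_neg_of_pos hc (radHarm_pos hN h)).le

lemma contDiffOn_rpow_Ioi (a : ℝ) {n : WithTop ℕ∞} :
    ContDiffOn ℝ n (fun t : ℝ => t ^ a) (Ioi 0) :=
  contDiffOn_id.rpow_const_of_ne fun _ hx => (ne_of_gt hx)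

/-- Bootstrap: the profile is `C¹`, so the flux density `t^{N-1} (max w 0)^p` is `C¹`, so the flux
is `C²`, and with it the profile. -/
lemma flux_prof_contDiffOn {N : ℕ} (hN : 2 ≤ N) {p : ℝ} (hp : 1 < p) {u : ℝ → ℝ}
    (hreg : ContDiffOn ℝ 2 u (Icc 0 1)) (hpos : ∀ r ∈ Ico (0 : ℝ) 1, 0 < u r) (hu1 : u 1 = 0)
    (hc : deriv u 1 < 0)
    (hode : ∀ r ∈ Ioo (0 : ℝ) 1,
      deriv (deriv u) r + (((N : ℝ) - 1) / r) * deriv u r = -(u r ^ p)) :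
    ContDiffOn ℝ 2 (flux ((N : ℝ) - 1) p u) (Ioi 0) ∧
      ContDiffOn ℝ 2 (prof N (deriv u 1) u) (Ioi 0) := by
  have hN' : (2 : ℝ) ≤ N := by exact_mod_cast hN
  have hs : (0 : ℝ) < (N : ℝ) - 1 := by linarith
  have hp0 : 0 < p := by linarith
  have hcu := hreg.continuousOn
  have hd1 := differentiableAt_of_deriv_ne_zero hc.ne
  have hw : ∀ t ∈ Ioi (0 : ℝ), _ := fun t ht => prof_hasDerivAt hN hp0 hreg hu1 hd1 hode ht
  have hF : ∀ t ∈ Ioi (0 : ℝ), _ := fun t _ => flux_hasDerivAt hs hp0 hcu t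
  have hF0 : ContDiffOn ℝ ((0 : ℕ) : WithTop ℕ∞) (flux ((N : ℝ) - 1) p u) (Ioi 0) := by
    rw [Nat.cast_zero, contDiffOn_zero]
    exact fun t ht => (hF t ht).continuousAt.continuousWithinAt
  have hw1 : ContDiffOn ℝ 1 (prof N (deriv u 1) u) (Ioi 0) := by
    have := contDiffOn_succ_of_hasDerivAt hw ((contDiffOn_rpow_Ioi _).mul hF0).neg
    simpa using this
  have hg1 : ContDiffOn ℝ ((1 : ℕ) : WithTop ℕ∞)
      (fun t => t ^ ((N : ℝ) - 1) * uExt u t ^ p) (Ioi 0) := by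
    rw [Nat.cast_one]
    refine ((contDiffOn_rpow_Ioi ((N : ℝ) - 1)).mul
      ((contDiff_posPart_rpow hp).comp_contDiffOn hw1)).congr ?_
    intro t ht
    simp only [uExt_eq_max_prof hN hc hpos hu1 ht, Function.comp]
  have hF2 : ContDiffOn ℝ 2 (flux ((N : ℝ) - 1) p u) (Ioi 0) := by
    have := contDiffOn_succ_of_hasDerivAt hF hg1
    rwa [Nat.cast_one, one_add_one_eq_two] at this
  refine ⟨hF2, ?_⟩
  have h1 : ContDiffOn ℝ ((1 : ℕ) : WithTop ℕ∞) (flux ((N : ℝ) - 1) p u) (Ioi 0) :=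
    hF2.of_le (by norm_num)
  have := contDiffOn_succ_of_hasDerivAt hw ((contDiffOn_rpow_Ioi _).mul h1).neg
  rwa [Nat.cast_one, one_add_one_eq_two] at this

/-! ### The mass function and the boundary value in terms of the flux and the profile -/

lemma gamR_eq {N : ℕ} {p RN c : ℝ} (hRN : 0 < RN) (u : ℝ → ℝ) {R : ℝ} (hR : 0 < R) :
    gamR N p RN c u R = R ^ (-(2 / (p - 1))) * prof N c u (RN / R) := by
  unfold gamR prof radHarm
  have hle : RN / R ≤ 1 ↔ RN ≤ R := div_le_one hR
  simp only [hle]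
  split_ifs with h1 h2
  · rfl
  · ring
  · have h3 : (RN / R) ^ (-((N : ℝ) - 2)) = (R / RN) ^ ((N : ℝ) - 2) := by
      rw [Real.rpow_neg (by positivity), ← Real.inv_rpow (by positivity), inv_div]
    rw [h3]
    ring

/-- For `a, b, k > 0` the function `R ↦ R^{-a} k F(b/R)` has negative derivative when
`F > 0` and `F' ≥ 0`. -/
lemma deriv_mass_neg {a k b : ℝ} (ha : 0 < a) (hk : 0 < k) (hb : 0 < b) {F : ℝ → ℝ}
    (hF : ∀ x, 0 < x → 0 < F x) (hF' : ∀ x, 0 < x → ∃ d, 0 ≤ d ∧ HasDerivAt F d x)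
    {R : ℝ} (hR : 0 < R) : deriv (fun R => R ^ (-a) * (k * F (b / R))) R < 0 := by
  have hbR : 0 < b / R := by positivity
  obtain ⟨d, hd, hFd⟩ := hF' _ hbR
  have h1 : HasDerivAt (fun R : ℝ => b / R) (-(b / R ^ 2)) R := by
    convert! (hasDerivAt_inv hR.ne').const_mul b using 1
    ring
  have h2 := (Real.hasDerivAt_rpow_const (x := R) (p := -a) (Or.inl hR.ne')).mul
    ((hFd.comp R h1).const_mul k)
  have h3 := h2.deriv
  simp only [Function.comp_def] at h3
  have h4 : deriv (fun R => R ^ (-a) * (k * F (b / R))) R =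
      -a * R ^ (-a - 1) * (k * F (b / R)) + R ^ (-a) * (k * (d * -(b / R ^ 2))) := h3
  rw [h4]
  have h5 : 0 < a * R ^ (-a - 1) * (k * F (b / R)) := by
    have := hF _ hbR
    positivity
  have h6 : 0 ≤ R ^ (-a) * (k * (d * (b / R ^ 2))) := by positivity
  linarith

/-- regularity of `α_λ`.  With `R(λ)` the unique `R > 0` such that
`𝓘_N(R) = λ^{p/(p-1)}`, the function `α(λ) = λ^{-1/(p-1)} γ(R(λ))` is twice
continuously differentiable on `(0, +∞)`. -/
theorem alpha_contDiff_two
    {N : ℕ} (hN : 2 ≤ N) (p : ℝ) (hp1 : 1 < p)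
    (hpN : 3 ≤ N → p < (N : ℝ) / ((N : ℝ) - 2))
    (ωN RN : ℝ)
    (hω : ωN = (volume (Metric.ball (0 : EuclideanSpace ℝ (Fin N)) 1)).toReal)
    (hRN0 : 0 < RN) (hRN : ωN * RN ^ N = 1)
    (u : ℝ → ℝ)
    (hreg : ContDiffOn ℝ 2 u (Icc 0 1))
    (hpos : ∀ r ∈ Ico (0 : ℝ) 1, 0 < u r)
    (hu1 : u 1 = 0)
    (hu' : ∀ r ∈ Ioc (0 : ℝ) 1, deriv u r < 0)
    (hu'0 : deriv u 0 = 0)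
    (hode : ∀ r ∈ Ioo (0 : ℝ) 1,
      deriv (deriv u) r + (((N : ℝ) - 1) / r) * deriv u r = -(u r ^ p))
    (Rfun : ℝ → ℝ)
    (hRfun : ∀ lam ∈ Ioi (0 : ℝ), 0 < Rfun lam ∧
      scrIN N p ωN RN u (Rfun lam) = lam ^ (p / (p - 1))) :
    ContDiffOn ℝ 2
      (fun lam => lam ^ (-(1 / (p - 1))) * gamR N p RN (deriv u 1) u (Rfun lam))
      (Ioi 0) := by
  have hN' : (2 : ℝ) ≤ N := by exact_mod_cast hN
  have hs : (0 : ℝ) < (N : ℝ) - 1 := by linarith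
  have hp0 : 0 < p := by linarith
  have hq : 0 < p - 1 := by linarith
  have hcu := hreg.continuousOn
  have hωpos : 0 < ωN := by
    have h : 0 < ωN * RN ^ N := by rw [hRN]; exact one_pos
    exact pos_of_mul_pos_left h (by positivity)
  -- Subcriticality `p < N/(N-2)` is exactly positivity of the exponent.
  have ha : 0 < 2 / (p - 1) - (N : ℝ) + 2 := by
    rcases hN.eq_or_lt with h | h
    · rw [← h]
      have : 0 < 2 / (p - 1) := by positivity
      push_cast
      linarith
    · have h3 : (3 : ℝ) ≤ N := by exact_mod_cast h
      have h1 := hpN h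
      rw [lt_div_iff₀ (by linarith)] at h1
      have : (N : ℝ) - 2 < 2 / (p - 1) := by
        rw [lt_div_iff₀ hq]
        nlinarith
      linarith
  have hc := hu' 1 (right_mem_Ioc.2 zero_lt_one)
  obtain ⟨hF2, hw2⟩ := flux_prof_contDiffOn hN hp1 hreg hpos hu1 hc hode
  set F := flux ((N : ℝ) - 1) p u with hFdef
  set J : ℝ → ℝ := fun R =>
    R ^ (-(2 / (p - 1) - (N : ℝ) + 2)) * ((N : ℝ) * ωN * F (RN / R)) with hJ
  have hquot : ContDiffOn ℝ 2 (fun R : ℝ => RN / R) (Ioi 0) :=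
    contDiffOn_const.div contDiffOn_id fun x hx => ne_of_gt hx
  have hmaps : MapsTo (fun R : ℝ => RN / R) (Ioi 0) (Ioi 0) := fun R hR => div_pos hRN0 hR
  have hJ2 : ContDiffOn ℝ 2 J (Ioi 0) :=
    (contDiffOn_rpow_Ioi _).mul (contDiffOn_const.mul (hF2.comp hquot hmaps))
  have hJ' : ∀ R ∈ Ioi (0 : ℝ), deriv J R < 0 := by
    intro R hR
    refine deriv_mass_neg ha (by positivity) hRN0
      (fun x hx => flux_pos hs hp0 hcu hpos hu1 hx) (fun x hx => ⟨_, ?_,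
        flux_hasDerivAt hs hp0 hcu x⟩) hR
    exact mul_nonneg (Real.rpow_nonneg hx.le _) (Real.rpow_nonneg (uExt_nonneg hpos hu1 x) _)
  have hR2 : ContDiffOn ℝ 2 Rfun (Ioi 0) := by
    refine contDiffOn_of_comp_eq hJ2 hJ' (contDiffOn_rpow_Ioi (p / (p - 1))) ?_
    intro x hx
    obtain ⟨h1, h2⟩ := hRfun x hx
    refine ⟨h1, ?_⟩
    rw [← h2, scrIN, flux_eq_integral_min hs hp0 hcu hu1 (div_pos hRN0 h1)]
  have hRmaps : MapsTo Rfun (Ioi 0) (Ioi 0) := fun x hx => (hRfun x hx).1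
  refine ContDiffOn.congr (f := fun lam => lam ^ (-(1 / (p - 1))) *
    (Rfun lam ^ (-(2 / (p - 1))) * prof N (deriv u 1) u (RN / Rfun lam))) ?_ ?_
  · exact (contDiffOn_rpow_Ioi _).mul
      (((contDiffOn_rpow_Ioi _).mul (hw2.comp hquot hmaps)).comp hR2 hRmaps)
  · intro x hx
    simp only [gamR_eq hRN0 u (hRmaps hx)]

end
end

section
/- Bell shape of the Gelfand parameter on the ball: set λ₊ := 𝓘_N(R_N)^{(p−1)/p}; for λ ∈ (0, λ₊) let R(λ) be the unique R > 0 with 𝓘_N(R) = λ^{p/(p−1)}, and set r(λ) := R_N / R(λ) and μ(λ) := r(λ)² u(r(λ))^{p−1} / R_N². Then λ ↦ r(λ) is continuous, strictly increasing, and maps (0, λ₊) onto (0,1); and there exists λ^t ∈ (0, λ₊) such that μ is strictly increasing on (0, λ^t], strictly decreasing on [λ^t, λ₊), with μ(λ) → 0 as λ → 0⁺ and μ(λ) → 0 as λ → λ₊⁻. -/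
/-!
In the variable `r = R_N / R`, the mass `𝓘_N` is a positive power of `r` (subcriticality of `p`)
times a positive nondecreasing integral, so it is positive and strictly decreasing in `R`
(`scrIN_pos`, `scrIN_strictAnti`). Hence `λ ↦ r(λ)` is the inverse of a strictly increasing
function on `(0, 1)`: it is strictly increasing and onto `(0, 1)`, and a monotone map onto an open
interval is continuous.

It remains to see that `m(r) = r² u(r)^{p-1}` is bell shaped on `[0, 1]` (`exists_bell_peak`).
On `(0, 1)` its derivative is `r u^{p-2} h` with `h = 2u + (p-1) r u'`. By the equation,
`h' = (2 - (p-1)(N-2)) u' - (p-1) r u^p`, which is negative because `p < N/(N-2)` and `u' < 0`.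
Since `h(0) = 2u(0) > 0` and `h(1) = (p-1) u'(1) < 0`, the function `h` has exactly one zero,
at which `m` peaks. The limits of `μ` follow from `m(0) = m(1) = 0` and the continuity of `m`.
-/

open MeasureTheory Set Filter

noncomputable section

/-- The rescaled Gelfand parameter `μ(λ) = r(λ)² u(r(λ))^{p-1} / R_N²` where
`r(λ) = R_N / R(λ)`. -/
def muFun (p RN : ℝ) (u : ℝ → ℝ) (Rfun : ℝ → ℝ) (lam : ℝ) : ℝ :=
  (RN / Rfun lam) ^ 2 * u (RN / Rfun lam) ^ (p - 1) / RN ^ 2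

lemma subcritical_pos {N : ℕ} (hN : 2 ≤ N) {p : ℝ}
    (hpN : 3 ≤ N → p < (N : ℝ) / ((N : ℝ) - 2)) : 0 < 2 - (p - 1) * ((N : ℝ) - 2) := by
  rcases hN.eq_or_lt with h | h
  · subst h; norm_num
  · have h1 := hpN h
    have h3 : (3 : ℝ) ≤ N := by exact_mod_cast h
    rw [lt_div_iff₀ (by linarith)] at h1
    nlinarith

lemma continuousOn_integrand {N : ℕ} (hN : 2 ≤ N) {p : ℝ} (hp1 : 1 < p) {u : ℝ → ℝ}
    (hc : ContinuousOn u (Icc 0 1)) :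
    ContinuousOn (fun t : ℝ => t ^ ((N : ℝ) - 1) * u t ^ p) (Icc 0 1) := by
  have h2 : (2 : ℝ) ≤ N := by exact_mod_cast hN
  refine ContinuousOn.mul ?_ ?_
  · exact continuousOn_id.rpow_const fun x _ => Or.inr (by linarith)
  · exact hc.rpow_const fun x _ => Or.inr (by linarith)

lemma mass_pos_s16 {N : ℕ} (hN : 2 ≤ N) {p : ℝ} (hp1 : 1 < p) {u : ℝ → ℝ}
    (hc : ContinuousOn u (Icc 0 1)) (hpos : ∀ r ∈ Ico (0 : ℝ) 1, 0 < u r)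
    {s : ℝ} (hs0 : 0 < s) (hs1 : s ≤ 1) :
    0 < ∫ t in (0 : ℝ)..s, t ^ ((N : ℝ) - 1) * u t ^ p := by
  refine intervalIntegral.intervalIntegral_pos_of_pos_on ?_ ?_ hs0
  · refine ((continuousOn_integrand hN hp1 hc).mono ?_).intervalIntegrable
    rw [uIcc_of_le hs0.le]
    exact Icc_subset_Icc_right hs1
  · intro x hx
    exact mul_pos (Real.rpow_pos_of_pos hx.1 _)
      (Real.rpow_pos_of_pos (hpos x ⟨hx.1.le, hx.2.trans_le hs1⟩) _)

lemma mass_mono {N : ℕ} (hN : 2 ≤ N) {p : ℝ} (hp1 : 1 < p) {u : ℝ → ℝ}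
    (hc : ContinuousOn u (Icc 0 1)) (hnn : ∀ r ∈ Icc (0 : ℝ) 1, 0 ≤ u r)
    {s t : ℝ} (hs0 : 0 ≤ s) (hst : s ≤ t) (ht1 : t ≤ 1) :
    ∫ x in (0 : ℝ)..s, x ^ ((N : ℝ) - 1) * u x ^ p ≤
      ∫ x in (0 : ℝ)..t, x ^ ((N : ℝ) - 1) * u x ^ p := by
  refine intervalIntegral.integral_mono_interval le_rfl hs0 hst ?_ ?_
  · refine (ae_restrict_iff' measurableSet_Ioc).2 (ae_of_all _ fun x hx => ?_)
    exact mul_nonneg (Real.rpow_nonneg hx.1.le _)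
      (Real.rpow_nonneg (hnn x ⟨hx.1.le, hx.2.trans ht1⟩) _)
  · refine ((continuousOn_integrand hN hp1 hc).mono ?_).intervalIntegrable
    rw [uIcc_of_le (hs0.trans hst)]
    exact Icc_subset_Icc_right ht1

lemma scrIN_pos {N : ℕ} (hN : 2 ≤ N) {p : ℝ} (hp1 : 1 < p) {u : ℝ → ℝ} {ωN RN : ℝ}
    (hω0 : 0 < ωN) (hRN0 : 0 < RN) (hc : ContinuousOn u (Icc 0 1))
    (hpos : ∀ r ∈ Ico (0 : ℝ) 1, 0 < u r) {R : ℝ} (hR : 0 < R) :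
    0 < scrIN N p ωN RN u R := by
  have hN' : (0 : ℝ) < N := by exact_mod_cast (by omega : 0 < N)
  exact mul_pos (Real.rpow_pos_of_pos hR _) (mul_pos (mul_pos hN' hω0)
    (mass_pos_s16 hN hp1 hc hpos (lt_min one_pos (div_pos hRN0 hR)) (min_le_left _ _)))

lemma scrIN_strictAnti {N : ℕ} (hN : 2 ≤ N) {p : ℝ} (hp1 : 1 < p)
    (hpN : 3 ≤ N → p < (N : ℝ) / ((N : ℝ) - 2)) {u : ℝ → ℝ} {ωN RN : ℝ}
    (hω0 : 0 < ωN) (hRN0 : 0 < RN) (hc : ContinuousOn u (Icc 0 1))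
    (hpos : ∀ r ∈ Ico (0 : ℝ) 1, 0 < u r) (hu1 : u 1 = 0) :
    StrictAntiOn (scrIN N p ωN RN u) (Ioi 0) := by
  intro R hR S hS hRS
  rw [mem_Ioi] at hR hS
  have hN' : (0 : ℝ) < N := by exact_mod_cast (by omega : 0 < N)
  have hnn : ∀ r ∈ Icc (0 : ℝ) 1, 0 ≤ u r := by
    intro r hr
    rcases hr.2.eq_or_lt with h | h
    · rw [h, hu1]
    · exact (hpos r ⟨hr.1, h⟩).le
  have ha : 0 < 2 / (p - 1) - (N : ℝ) + 2 := by
    have h1 := subcritical_pos hN hpN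
    have h2 : (N : ℝ) - 2 < 2 / (p - 1) := by
      rw [lt_div_iff₀ (by linarith)]; linarith
    linarith
  unfold scrIN
  refine mul_lt_mul (Real.rpow_lt_rpow_of_neg hR hRS (by linarith)) ?_ ?_
    (Real.rpow_nonneg hR.le _)
  · refine mul_le_mul_of_nonneg_left ?_ (by positivity)
    refine mass_mono hN hp1 hc hnn (le_min zero_le_one (by positivity)) ?_ (min_le_left _ _)
    exact min_le_min_left _ (div_le_div_of_nonneg_left hRN0.le hR hRS.le)
  · exact mul_pos (mul_pos hN' hω0)
      (mass_pos_s16 hN hp1 hc hpos (lt_min one_pos (div_pos hRN0 hS)) (min_le_left _ _))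

/-- The function `r ↦ r² u(r)^{p-1}` has a single interior peak. The function `h` of the argument
is written with `derivWithin u (Icc 0 1)`, which is continuous up to both endpoints. -/
lemma exists_bell_peak {N : ℕ} (hN : 2 ≤ N) {p : ℝ} (hp1 : 1 < p)
    (hpN : 3 ≤ N → p < (N : ℝ) / ((N : ℝ) - 2)) {u : ℝ → ℝ}
    (hreg : ContDiffOn ℝ 2 u (Icc 0 1))
    (hpos : ∀ r ∈ Ico (0 : ℝ) 1, 0 < u r)
    (hu1 : u 1 = 0)
    (hu' : ∀ r ∈ Ioc (0 : ℝ) 1, deriv u r < 0)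
    (hode : ∀ r ∈ Ioo (0 : ℝ) 1,
      deriv (deriv u) r + (((N : ℝ) - 1) / r) * deriv u r = -(u r ^ p)) :
    ∃ ρ ∈ Ioo (0 : ℝ) 1, StrictMonoOn (fun r => r ^ 2 * u r ^ (p - 1)) (Icc 0 ρ) ∧
      StrictAntiOn (fun r => r ^ 2 * u r ^ (p - 1)) (Icc ρ 1) := by
  have hc := hreg.continuousOn
  set v := derivWithin u (Icc 0 1) with hv
  have hud : UniqueDiffOn ℝ (Icc (0 : ℝ) 1) := uniqueDiffOn_Icc one_pos
  have hvC : ContDiffOn ℝ 1 v (Icc 0 1) :=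
    hreg.derivWithin hud (by norm_num)
  have hvc : ContinuousOn v (Icc 0 1) := hvC.continuousOn
  have hnh : ∀ r ∈ Ioo (0 : ℝ) 1, Icc (0 : ℝ) 1 ∈ nhds r := fun r hr => Icc_mem_nhds hr.1 hr.2
  have hveq : ∀ r ∈ Ioo (0 : ℝ) 1, v r = deriv u r := fun r hr =>
    derivWithin_of_mem_nhds (hnh r hr)
  have hder : ∀ r ∈ Ioo (0 : ℝ) 1, HasDerivAt u (v r) r := by
    intro r hr
    rw [hveq r hr]
    exact ((hreg.contDiffAt (hnh r hr)).differentiableAt (by norm_num)).hasDerivAt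
  have hvder : ∀ r ∈ Ioo (0 : ℝ) 1, HasDerivAt v (deriv (deriv u) r) r := by
    intro r hr
    have h1 : HasDerivAt v (deriv v r) r :=
      ((hvC.contDiffAt (hnh r hr)).differentiableAt (by norm_num)).hasDerivAt
    have h2 : v =ᶠ[nhds r] deriv u := by
      filter_upwards [Ioo_mem_nhds hr.1 hr.2] with x hx using hveq x hx
    rwa [h2.deriv_eq] at h1
  have hv1 : v 1 < 0 := by
    have h1 := hu' 1 ⟨one_pos, le_rfl⟩
    have h2 : DifferentiableAt ℝ u 1 := differentiableAt_of_deriv_ne_zero h1.ne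
    rw [hv, h2.derivWithin (hud 1 ⟨zero_le_one, le_rfl⟩)]
    exact h1
  set h : ℝ → ℝ := fun r => 2 * u r + (p - 1) * (r * v r) with hh
  have hhc : ContinuousOn h (Icc 0 1) := by
    rw [hh]; fun_prop
  have hhd : ∀ r ∈ Ioo (0 : ℝ) 1, HasDerivAt h
      (2 * v r + (p - 1) * (1 * v r + r * deriv (deriv u) r)) r := fun r hr =>
    ((hder r hr).const_mul 2).add
      (((hasDerivAt_id r).mul (hvder r hr)).const_mul (p - 1))
  have hanti : StrictAntiOn h (Icc 0 1) := by
    refine strictAntiOn_of_deriv_neg (convex_Icc 0 1) hhc fun r hr => ?_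
    rw [interior_Icc] at hr
    rw [(hhd r hr).deriv]
    have e := hode r hr
    rw [← hveq r hr] at e
    have hvn : v r < 0 := by rw [hveq r hr]; exact hu' r ⟨hr.1, hr.2.le⟩
    have e2 : r * deriv (deriv u) r = -((N : ℝ) - 1) * v r - r * u r ^ p := by
      have : deriv (deriv u) r = -(u r ^ p) - (((N : ℝ) - 1) / r) * v r := by linarith
      rw [this]
      have := hr.1.ne'
      field_simp
      ring
    have hup : 0 < (p - 1) * (r * u r ^ p) :=
      mul_pos (by linarith) (mul_pos hr.1 (Real.rpow_pos_of_pos (hpos r ⟨hr.1.le, hr.2⟩) _))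
    rw [e2]
    nlinarith [mul_neg_of_pos_of_neg (subcritical_pos hN hpN) hvn]
  have h0 : 0 < h 0 := by
    have := hpos 0 ⟨le_rfl, one_pos⟩
    simp only [hh]; linarith
  have h1 : h 1 < 0 := by
    simp only [hh, hu1]
    nlinarith
  obtain ⟨ρ, hρ, hρ0⟩ := intermediate_value_Ioo' zero_le_one hhc
    (show (0 : ℝ) ∈ Ioo (h 1) (h 0) from ⟨h1, h0⟩)
  have hmc : ContinuousOn (fun r => r ^ 2 * u r ^ (p - 1)) (Icc 0 1) :=
    (continuousOn_id.pow 2).mul (hc.rpow_const fun x _ => Or.inr (by linarith))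
  have hmd : ∀ r ∈ Ioo (0 : ℝ) 1, deriv (fun r => r ^ 2 * u r ^ (p - 1)) r =
      r * u r ^ (p - 1 - 1) * h r := by
    intro r hr
    have hur := hpos r ⟨hr.1.le, hr.2⟩
    have d := ((hasDerivAt_id r).pow 2).mul
      ((hder r hr).rpow_const (p := p - 1) (Or.inl hur.ne'))
    refine d.deriv.trans ?_
    have e : u r ^ (p - 1) = u r ^ (p - 1 - 1) * u r := by
      rw [← Real.rpow_add_one hur.ne']; congr 1; ring
    simp only [Pi.pow_apply, id]
    rw [e]
    simp only [hh]
    ring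
  have hfac : ∀ r ∈ Ioo (0 : ℝ) 1, 0 < r * u r ^ (p - 1 - 1) := fun r hr =>
    mul_pos hr.1 (Real.rpow_pos_of_pos (hpos r ⟨hr.1.le, hr.2⟩) _)
  refine ⟨ρ, hρ, ?_, ?_⟩
  · refine strictMonoOn_of_deriv_pos (convex_Icc _ _)
      (hmc.mono (Icc_subset_Icc_right hρ.2.le)) fun r hr => ?_
    rw [interior_Icc] at hr
    have hr' : r ∈ Ioo (0 : ℝ) 1 := ⟨hr.1, hr.2.trans hρ.2⟩
    rw [hmd r hr']
    refine mul_pos (hfac r hr') ?_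
    have := hanti ⟨hr'.1.le, hr'.2.le⟩ ⟨hρ.1.le, hρ.2.le⟩ hr.2
    linarith
  · refine strictAntiOn_of_deriv_neg (convex_Icc _ _)
      (hmc.mono (Icc_subset_Icc_left hρ.1.le)) fun r hr => ?_
    rw [interior_Icc] at hr
    have hr' : r ∈ Ioo (0 : ℝ) 1 := ⟨hρ.1.trans hr.1, hr.2⟩
    rw [hmd r hr']
    refine mul_neg_of_pos_of_neg (hfac r hr') ?_
    have := hanti ⟨hρ.1.le, hρ.2.le⟩ ⟨hr'.1.le, hr'.2.le⟩ hr.1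
    linarith

/-- bell shape of the Gelfand parameter on the ball.  With
`λ₊ = 𝓘_N(R_N)^{(p-1)/p}` and `R(λ)` the unique `R > 0` with `𝓘_N(R) = λ^{p/(p-1)}`,
the map `λ ↦ r(λ) = R_N/R(λ)` is continuous, strictly increasing and maps
`(0, λ₊)` onto `(0,1)`; and there is `λ^t ∈ (0, λ₊)` such that `μ` is strictly
increasing on `(0, λ^t]`, strictly decreasing on `[λ^t, λ₊)`, with `μ(λ) → 0` as
`λ → 0⁺` and as `λ → λ₊⁻`. -/
theorem bell_shape_on_ball
    {N : ℕ} (hN : 2 ≤ N) (p : ℝ) (hp1 : 1 < p)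
    (hpN : 3 ≤ N → p < (N : ℝ) / ((N : ℝ) - 2))
    (ωN RN : ℝ)
    (hω : ωN = (volume (Metric.ball (0 : EuclideanSpace ℝ (Fin N)) 1)).toReal)
    (hRN0 : 0 < RN) (hRN : ωN * RN ^ N = 1)
    (u : ℝ → ℝ)
    (hreg : ContDiffOn ℝ 2 u (Icc 0 1))
    (hpos : ∀ r ∈ Ico (0 : ℝ) 1, 0 < u r)
    (hu1 : u 1 = 0)
    (hu' : ∀ r ∈ Ioc (0 : ℝ) 1, deriv u r < 0)
    (hu'0 : deriv u 0 = 0)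
    (hode : ∀ r ∈ Ioo (0 : ℝ) 1,
      deriv (deriv u) r + (((N : ℝ) - 1) / r) * deriv u r = -(u r ^ p))
    (lamPlus : ℝ) (hlamPlus : lamPlus = scrIN N p ωN RN u RN ^ ((p - 1) / p))
    (Rfun : ℝ → ℝ)
    (hRfun : ∀ lam ∈ Ioo (0 : ℝ) lamPlus, 0 < Rfun lam ∧
      scrIN N p ωN RN u (Rfun lam) = lam ^ (p / (p - 1))) :
    ContinuousOn (fun lam => RN / Rfun lam) (Ioo 0 lamPlus) ∧
    StrictMonoOn (fun lam => RN / Rfun lam) (Ioo 0 lamPlus) ∧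
    (fun lam => RN / Rfun lam) '' Ioo 0 lamPlus = Ioo 0 1 ∧
    (∃ lamT ∈ Ioo (0 : ℝ) lamPlus,
      StrictMonoOn (muFun p RN u Rfun) (Ioc 0 lamT) ∧
      StrictAntiOn (muFun p RN u Rfun) (Ico lamT lamPlus)) ∧
    Tendsto (muFun p RN u Rfun) (nhdsWithin 0 (Ioi 0)) (nhds 0) ∧
    Tendsto (muFun p RN u Rfun) (nhdsWithin lamPlus (Iio lamPlus)) (nhds 0) := by
  have hc := hreg.continuousOn
  have hω0 : 0 < ωN := by
    have h1 : (0 : ℝ) < RN ^ N := pow_pos hRN0 N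
    by_contra hcon
    nlinarith [mul_nonneg (sub_nonneg.2 (not_lt.1 hcon)) h1.le]
  have hIpos : ∀ R, 0 < R → 0 < scrIN N p ωN RN u R := fun R hR =>
    scrIN_pos hN hp1 hω0 hRN0 hc hpos hR
  have hIanti := scrIN_strictAnti hN hp1 hpN hω0 hRN0 hc hpos hu1
  have hp0 : 0 < p - 1 := by linarith
  have hq : 0 < p / (p - 1) := by positivity
  have hq' : 0 < (p - 1) / p := by positivity
  -- The two exponents are inverse to each other.
  have hinv : ∀ x : ℝ, 0 ≤ x → (x ^ ((p - 1) / p)) ^ (p / (p - 1)) = x := by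
    intro x hx
    rw [← Real.rpow_mul hx, show (p - 1) / p * (p / (p - 1)) = 1 by field_simp, Real.rpow_one]
  have hL0 : 0 < lamPlus := hlamPlus ▸ Real.rpow_pos_of_pos (hIpos RN hRN0) _
  have hLq : lamPlus ^ (p / (p - 1)) = scrIN N p ωN RN u RN := by
    rw [hlamPlus, hinv _ (hIpos RN hRN0).le]
  have hmono : StrictMonoOn (fun lam => RN / Rfun lam) (Ioo 0 lamPlus) := by
    intro a ha b hb hab
    obtain ⟨ha0, hae⟩ := hRfun a ha
    obtain ⟨hb0, hbe⟩ := hRfun b hb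
    have h1 : scrIN N p ωN RN u (Rfun a) < scrIN N p ωN RN u (Rfun b) := by
      rw [hae, hbe]; exact Real.rpow_lt_rpow ha.1.le hab hq
    exact div_lt_div_of_pos_left hRN0 hb0 ((hIanti.lt_iff_gt ha0 hb0).1 h1)
  have himg : (fun lam => RN / Rfun lam) '' Ioo 0 lamPlus = Ioo 0 1 := by
    ext r
    constructor
    · rintro ⟨a, ha, rfl⟩
      obtain ⟨ha0, hae⟩ := hRfun a ha
      have h1 : scrIN N p ωN RN u (Rfun a) < scrIN N p ωN RN u RN := by
        rw [hae, ← hLq]; exact Real.rpow_lt_rpow ha.1.le ha.2 hq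
      exact ⟨div_pos hRN0 ha0, (div_lt_one ha0).2 ((hIanti.lt_iff_gt ha0 hRN0).1 h1)⟩
    · intro hr
      have hR : 0 < RN / r := div_pos hRN0 hr.1
      have hlt : RN < RN / r := by
        rw [lt_div_iff₀ hr.1]; nlinarith [hr.2]
      have hmem : scrIN N p ωN RN u (RN / r) ^ ((p - 1) / p) ∈ Ioo 0 lamPlus := by
        refine ⟨Real.rpow_pos_of_pos (hIpos _ hR) _, ?_⟩
        rw [hlamPlus]
        exact Real.rpow_lt_rpow (hIpos _ hR).le (hIanti hRN0 hR hlt) hq'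
      refine ⟨_, hmem, ?_⟩
      obtain ⟨ha0, hae⟩ := hRfun _ hmem
      rw [hinv _ (hIpos _ hR).le] at hae
      have := hIanti.injOn ha0 hR hae
      simp only [this]
      have := hr.1.ne'
      field_simp
  have hmaps : ∀ a ∈ Ioo 0 lamPlus, RN / Rfun a ∈ Ioo (0 : ℝ) 1 := fun a ha =>
    himg ▸ mem_image_of_mem (fun lam => RN / Rfun lam) ha
  have hsurj : ∀ r ∈ Ioo (0 : ℝ) 1, ∃ a ∈ Ioo 0 lamPlus, RN / Rfun a = r := by
    intro r hr
    rw [← himg] at hr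
    exact hr
  have hcont : ContinuousOn (fun lam => RN / Rfun lam) (Ioo 0 lamPlus) := by
    intro a ha
    refine (continuousAt_of_monotoneOn_of_image_mem_nhds hmono.monotoneOn
      (Ioo_mem_nhds ha.1 ha.2) ?_).continuousWithinAt
    rw [himg]
    exact Ioo_mem_nhds (hmaps a ha).1 (hmaps a ha).2
  have hmc : ContinuousOn (fun r => r ^ 2 * u r ^ (p - 1) / RN ^ 2) (Icc 0 1) :=
    ((continuousOn_id.pow 2).mul (hc.rpow_const fun x _ => Or.inr hp0.le)).div_const _
  have hlim0 : Tendsto (fun lam => RN / Rfun lam) (nhdsWithin 0 (Ioi 0))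
      (nhdsWithin 0 (Icc 0 1)) := by
    refine tendsto_nhdsWithin_iff.2 ⟨?_, ?_⟩
    · refine tendsto_order.2 ⟨fun b hb => ?_, fun b hb => ?_⟩
      · filter_upwards [Ioo_mem_nhdsGT hL0] with a ha using hb.trans (hmaps a ha).1
      · obtain ⟨c, hcm, hce⟩ := hsurj (min b (1 / 2))
          ⟨lt_min hb (by norm_num), (min_le_right _ _).trans_lt (by norm_num)⟩
        filter_upwards [Ioo_mem_nhdsGT hcm.1] with a ha
        have := hmono ⟨ha.1, ha.2.trans hcm.2⟩ hcm ha.2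
        exact this.trans_le (hce.le.trans (min_le_left _ _))
    · filter_upwards [Ioo_mem_nhdsGT hL0] with a ha using Ioo_subset_Icc_self (hmaps a ha)
  have hlim1 : Tendsto (fun lam => RN / Rfun lam) (nhdsWithin lamPlus (Iio lamPlus))
      (nhdsWithin 1 (Icc 0 1)) := by
    refine tendsto_nhdsWithin_iff.2 ⟨?_, ?_⟩
    · refine tendsto_order.2 ⟨fun b hb => ?_, fun b hb => ?_⟩
      · obtain ⟨c, hcm, hce⟩ := hsurj (max b (1 / 2))
          ⟨lt_max_of_lt_right (by norm_num), max_lt hb (by norm_num)⟩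
        filter_upwards [Ioo_mem_nhdsLT hcm.2] with a ha
        have := hmono hcm ⟨hcm.1.trans ha.1, ha.2⟩ ha.1
        exact ((le_max_left _ _).trans hce.ge).trans_lt this
      · filter_upwards [Ioo_mem_nhdsLT hL0] with a ha using (hmaps a ha).2.trans hb
    · filter_upwards [Ioo_mem_nhdsLT hL0] with a ha using Ioo_subset_Icc_self (hmaps a ha)
  refine ⟨hcont, hmono, himg, ?_, ?_, ?_⟩
  · obtain ⟨ρ, hρ, hinc, hdec⟩ := exists_bell_peak hN hp1 hpN hreg hpos hu1 hu' hode
    obtain ⟨T, hT, hTe⟩ := hsurj ρ hρ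
    have hRN2 : 0 < RN ^ 2 := by positivity
    refine ⟨T, hT, ?_, ?_⟩
    · intro a ha b hb hab
      have ha' : a ∈ Ioo 0 lamPlus := ⟨ha.1, ha.2.trans_lt hT.2⟩
      have hb' : b ∈ Ioo 0 lamPlus := ⟨hb.1, hb.2.trans_lt hT.2⟩
      refine div_lt_div_of_pos_right (hinc ⟨(hmaps a ha').1.le, ?_⟩ ⟨(hmaps b hb').1.le, ?_⟩
        (hmono ha' hb' hab)) hRN2
      · exact hTe ▸ hmono.monotoneOn ha' hT ha.2
      · exact hTe ▸ hmono.monotoneOn hb' hT hb.2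
    · intro a ha b hb hab
      have ha' : a ∈ Ioo 0 lamPlus := ⟨hT.1.trans_le ha.1, ha.2⟩
      have hb' : b ∈ Ioo 0 lamPlus := ⟨hT.1.trans_le hb.1, hb.2⟩
      refine div_lt_div_of_pos_right (hdec ⟨?_, (hmaps a ha').2.le⟩ ⟨?_, (hmaps b hb').2.le⟩
        (hmono ha' hb' hab)) hRN2
      · exact hTe ▸ hmono.monotoneOn hT ha' ha.1
      · exact hTe ▸ hmono.monotoneOn hT hb' hb.1
  · have h := (hmc 0 ⟨le_rfl, zero_le_one⟩).tendsto.comp hlim0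
    simp only [ne_eq, OfNat.ofNat_ne_zero, not_false_eq_true, zero_pow, zero_mul, zero_div] at h
    exact h
  · have h := (hmc 1 ⟨zero_le_one, le_rfl⟩).tendsto.comp hlim1
    have h0 : (0 : ℝ) ^ (p - 1) = 0 := Real.zero_rpow hp0.ne'
    simp only [hu1, h0, mul_zero, zero_div] at h
    exact h

end
end
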